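/- arXiv:0810.1227 — 4 statements merged into one kernel-verified Lean document; each statement's English description precedes it below -/
import Mathlib

section
/- Let m ≥ 0. In End_R(V^{⊗m}), the R-subalgebra generated by the operators ρ(e_i^{(l)}), ρ(f_i^{(l)}) (1 ≤ i ≤ n−1, l ≥ 1) together with all operators ρ(q^h) (h ∈ P∨) is equal to the R-subalgebra generated by the ρ(e_i^{(l)}), ρ(f_i^{(l)}) together with the operators ρ(K_i^{±1}) (1 ≤ i ≤ n−1) only. (That is, the image of the representation of the quantized enveloping algebra of gl_n on tensor space equals the image of the representation of its sl_n-subalgebra.) -/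
open scoped BigOperators

/-- The iterated tensor product of `m` copies of `V = R^n` and its dual `V*`
(which of the two is used in each tensor position is recorded separately by a
function `c : Fin m → Bool`, `true` meaning `V` and `false` meaning `V*`);
its basis is indexed by multi-indices. -/
abbrev Mx (R : Type*) [CommRing R] (n m : ℕ) := ((Fin m → Fin n) →₀ R)

/-- Kronecker delta with values in `ℤ`. -/
def deltaZ {n : ℕ} (a j : Fin n) : ℤ := if j = a then 1 else 0

/-- The action of `K_i^z e_i^{(k)}` on a single tensor factor (`b = true`: the
vector representation `V`; `b = false`: its dual `V*`, on which an element `x`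
acts by `φ ↦ φ ∘ S(x)`).  Here `a` plays the role of the index `i` and `b'`
of `i+1`.  The value at the basis vector with index `j` is returned as an
element of `Fin n →₀ R`. -/
noncomputable def singleE (R : Type*) [CommRing R] (q : Rˣ) (n : ℕ) (b : Bool)
    (a b' : Fin n) (z : ℤ) (k : ℕ) (j : Fin n) : Fin n →₀ R :=
  match b, k with
  | true, 0 => Finsupp.single j ((q ^ (z * (deltaZ a j - deltaZ b' j)) : Rˣ) : R)
  | true, 1 => if j = b' then Finsupp.single a ((q ^ z : Rˣ) : R) else 0
  | false, 0 => Finsupp.single j ((q ^ (z * (deltaZ b' j - deltaZ a j)) : Rˣ) : R)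
  | false, 1 => if j = a then Finsupp.single b' ((-(q ^ (z - 1)) : Rˣ) : R) else 0
  | _, _ + 2 => 0

/-- The action of `f_i^{(k)} K_i^z` on a single tensor factor; conventions as
in `singleE`. -/
noncomputable def singleF (R : Type*) [CommRing R] (q : Rˣ) (n : ℕ) (b : Bool)
    (a b' : Fin n) (z : ℤ) (k : ℕ) (j : Fin n) : Fin n →₀ R :=
  match b, k with
  | true, 0 => Finsupp.single j ((q ^ (z * (deltaZ a j - deltaZ b' j)) : Rˣ) : R)
  | true, 1 => if j = a then Finsupp.single b' ((q ^ z : Rˣ) : R) else 0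
  | false, 0 => Finsupp.single j ((q ^ (z * (deltaZ b' j - deltaZ a j)) : Rˣ) : R)
  | false, 1 => if j = b' then Finsupp.single a ((-(q ^ (z + 1)) : Rˣ) : R) else 0
  | _, _ + 2 => 0

/-- The operator `ρ(K_i^z e_i^{(k)})` on an `m`-fold tensor product of copies
of `V` and `V*` (described by `c`), obtained by iterating the comultiplication
`Δ(K_i^z e_i^{(k)}) = Σ_t q^{t(k−t)}·K_i^z e_i^{(k−t)} ⊗ K_i^{z+t−k} e_i^{(t)}`;
`a`, `b'` play the roles of `i`, `i+1`. -/
noncomputable def opE (R : Type*) [CommRing R] (q : Rˣ) (n : ℕ) (a b' : Fin n) :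
    (m : ℕ) → (c : Fin m → Bool) → ℤ → ℕ → (Mx R n m →ₗ[R] Mx R n m)
  | 0, _, _, k => if k = 0 then LinearMap.id else 0
  | (m + 1), c, z, k =>
    Finsupp.linearCombination R fun J : Fin (m + 1) → Fin n =>
      ∑ t ∈ Finset.range (k + 1),
        ((q ^ (t * (k - t)) : Rˣ) : R) •
          ((singleE R q n (c 0) a b' z (k - t) (J 0)).sum fun j' co =>
            co • Finsupp.mapDomain (Fin.cons j')
              (opE R q n a b' m (fun u => c u.succ) (z + (t : ℤ) - (k : ℤ)) t
                (Finsupp.single (Fin.tail J) 1)))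

/-- The operator `ρ(f_i^{(k)} K_i^z)`, obtained by iterating
`Δ(f_i^{(k)} K_i^z) = Σ_t q^{−t(k−t)}·f_i^{(k−t)} K_i^{z+t} ⊗ f_i^{(t)} K_i^z`. -/
noncomputable def opF (R : Type*) [CommRing R] (q : Rˣ) (n : ℕ) (a b' : Fin n) :
    (m : ℕ) → (c : Fin m → Bool) → ℤ → ℕ → (Mx R n m →ₗ[R] Mx R n m)
  | 0, _, _, k => if k = 0 then LinearMap.id else 0
  | (m + 1), c, z, k =>
    Finsupp.linearCombination R fun J : Fin (m + 1) → Fin n =>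
      ∑ t ∈ Finset.range (k + 1),
        ((q ^ (-(t * (k - t) : ℤ)) : Rˣ) : R) •
          ((singleF R q n (c 0) a b' (z + (t : ℤ)) (k - t) (J 0)).sum fun j' co =>
            co • Finsupp.mapDomain (Fin.cons j')
              (opF R q n a b' m (fun u => c u.succ) z t
                (Finsupp.single (Fin.tail J) 1)))

/-- The operator `ρ(q^h)` for `h = Σ h_i·(dual basis)` in the coweight lattice
`P∨` (identified with `Fin n → ℤ`): it acts diagonally, by `q^{ε_j(h)}` on a
`V`-factor with index `j` and by `q^{−ε_j(h)}` on a `V*`-factor. -/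
noncomputable def opH (R : Type*) [CommRing R] (q : Rˣ) (n : ℕ)
    (m : ℕ) (c : Fin m → Bool) (h : Fin n → ℤ) : Mx R n m →ₗ[R] Mx R n m :=
  Finsupp.linearCombination R fun J : Fin m → Fin n =>
    Finsupp.single J ((q ^ (∑ t, (if c t then (1 : ℤ) else -1) * h (J t)) : Rˣ) : R)

/-- The multi-index `j` with the entries in positions `p`, `p+1` swapped. -/
def swapIdx {n m : ℕ} (j : Fin m → Fin n) (p : ℕ) (hp : p + 1 < m) : Fin m → Fin n :=
  Function.update (Function.update j ⟨p, by omega⟩ (j ⟨p + 1, hp⟩)) ⟨p + 1, hp⟩ (j ⟨p, by omega⟩)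

/-- The Hecke operator `S` acting on two adjacent `V`-factors in tensor
positions `p`, `p+1` (0-based). -/
noncomputable def heckeOpX (R : Type*) [CommRing R] (q : Rˣ) (n m : ℕ)
    (p : ℕ) (hp : p + 1 < m) : Mx R n m →ₗ[R] Mx R n m :=
  Finsupp.linearCombination R fun j : Fin m → Fin n =>
    if j ⟨p, by omega⟩ = j ⟨p + 1, hp⟩ then
      ((q⁻¹ : Rˣ) : R) • Finsupp.single j 1
    else if j ⟨p, by omega⟩ < j ⟨p + 1, hp⟩ then
      Finsupp.single (swapIdx j p hp) 1
    else
      Finsupp.single (swapIdx j p hp) 1 + (((q⁻¹ : Rˣ) : R) - (q : R)) • Finsupp.single j 1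

/-- The Hecke operator `Ŝ` acting on two adjacent `V*`-factors in tensor
positions `p`, `p+1` (0-based). -/
noncomputable def heckeOpStar (R : Type*) [CommRing R] (q : Rˣ) (n m : ℕ)
    (p : ℕ) (hp : p + 1 < m) : Mx R n m →ₗ[R] Mx R n m :=
  Finsupp.linearCombination R fun j : Fin m → Fin n =>
    if j ⟨p, by omega⟩ = j ⟨p + 1, hp⟩ then
      ((q⁻¹ : Rˣ) : R) • Finsupp.single j 1
    else if j ⟨p + 1, hp⟩ < j ⟨p, by omega⟩ then
      Finsupp.single (swapIdx j p hp) 1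
    else
      Finsupp.single (swapIdx j p hp) 1 + (((q⁻¹ : Rˣ) : R) - (q : R)) • Finsupp.single j 1

/-- The contraction operator `E` of the walled Brauer algebra, acting on the
mixed tensor space `V^{⊗r} ⊗ (V*)^{⊗s}` at the tensor positions `r−1`, `r`
(0-based), i.e. at the last `V`-factor and the first `V*`-factor (it is `0`
by convention if `r = 0` or `s = 0`). -/
noncomputable def wallE (R : Type*) [CommRing R] (q : Rˣ) (n : ℕ) (r s : ℕ) :
    Mx R n (r + s) →ₗ[R] Mx R n (r + s) :=
  if h : 0 < r ∧ 0 < s then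
    Finsupp.linearCombination R fun j : Fin (r + s) → Fin n =>
      if j ⟨r - 1, by omega⟩ = j ⟨r, by omega⟩ then
        ((q ^ (2 * ((j ⟨r - 1, by omega⟩ : ℕ) : ℤ) + 2 - (n : ℤ) - 1) : Rˣ) : R) •
          ∑ u : Fin n,
            Finsupp.single
              (Function.update (Function.update j ⟨r - 1, by omega⟩ u) ⟨r, by omega⟩ u) 1
      else 0
  else 0

/-- The generating operators `E`, `S_t` (`1 ≤ t ≤ r−1`), `Ŝ_t` (`1 ≤ t ≤ s−1`)
of the action of the walled Brauer algebra `𝔅_{r,s}^n(q)` on the mixed tensor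
space. -/
def wallSet (R : Type*) [CommRing R] (q : Rˣ) (n : ℕ) (r s : ℕ) :
    Set (Module.End R (Mx R n (r + s))) :=
  {g | g = wallE R q n r s ∨
       (∃ (p : ℕ) (hp : p + 1 < r), g = heckeOpX R q n (r + s) p (by omega)) ∨
       (∃ (p : ℕ) (hp : p + 1 < s), g = heckeOpStar R q n (r + s) (r + p) (by omega))}

/-- The generators of the image of the quantized enveloping algebra `U`:
the operators `ρ(q^h)` (`h ∈ P∨`) together with the divided powers
`ρ(e_i^{(l)})`, `ρ(f_i^{(l)})` (`1 ≤ i ≤ n−1`, `l ≥ 1`). -/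
def qgGens (R : Type*) [CommRing R] (q : Rˣ) (n m : ℕ) (c : Fin m → Bool) :
    Set (Module.End R (Mx R n m)) :=
  {g | (∃ h : Fin n → ℤ, g = opH R q n m c h) ∨
       (∃ (i : Fin n) (hi : (i : ℕ) + 1 < n) (l : ℕ), 1 ≤ l ∧
          g = opE R q n i ⟨(i : ℕ) + 1, hi⟩ m c 0 l) ∨
       (∃ (i : Fin n) (hi : (i : ℕ) + 1 < n) (l : ℕ), 1 ≤ l ∧
          g = opF R q n i ⟨(i : ℕ) + 1, hi⟩ m c 0 l)}

/-- The generators of the image of the subalgebra `U'` (corresponding to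
`sl_n`): the operators `ρ(K_i^{±1})` (`1 ≤ i ≤ n−1`) together with the divided
powers `ρ(e_i^{(l)})`, `ρ(f_i^{(l)})` (`1 ≤ i ≤ n−1`, `l ≥ 1`). -/
def qgGensK (R : Type*) [CommRing R] (q : Rˣ) (n m : ℕ) (c : Fin m → Bool) :
    Set (Module.End R (Mx R n m)) :=
  {g | (∃ (i : Fin n) (hi : (i : ℕ) + 1 < n) (ε : ℤ), (ε = 1 ∨ ε = -1) ∧
          g = opH R q n m c (fun j => ε * (deltaZ i j - deltaZ ⟨(i : ℕ) + 1, hi⟩ j))) ∨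
       (∃ (i : Fin n) (hi : (i : ℕ) + 1 < n) (l : ℕ), 1 ≤ l ∧
          g = opE R q n i ⟨(i : ℕ) + 1, hi⟩ m c 0 l) ∨
       (∃ (i : Fin n) (hi : (i : ℕ) + 1 < n) (l : ℕ), 1 ≤ l ∧
          g = opF R q n i ⟨(i : ℕ) + 1, hi⟩ m c 0 l)}

/-!
Since `ρ(q^h)` acts on a basis tensor `v_J` through the weight of `J`, it suffices to show that
the subalgebra generated by the `e_i^{(l)}`, `f_i^{(l)}` and `K_i^{±1}` contains every diagonal
operator whose entry at `v_J` depends only on the weight of `J`.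

The commutation formula for `e_i^{(s)} f_i^{(s)}` expresses the diagonal operator with entries the
`q`-binomials `[w_i; s]`, where `w_i` is the value of the weight on the `i`-th simple coroot,
through divided powers and the operators `[w_i; t]` with `t < s`. The Pascal rule and `K_i^{-1}`
then give `[w_i + N; s]` for natural `N`, so `w_i` may be assumed nonnegative; as `[x; s]` is
unitriangular in `x, s = 0, 1, 2, …`, Newton interpolation yields every function of `w_i`, over an
arbitrary ring. Finally, the values on all simple coroots determine the weight, because the values
of all weights on `(1, …, 1)` agree.
-/

section QuantumBinomial

variable {R : Type*} [CommRing R] (q : Rˣ)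

/-- The power `q ^ z` of the unit `q`, as an element of `R`. -/
def qpow (z : ℤ) : R := ((q ^ z : Rˣ) : R)

theorem qpow_zero : qpow q 0 = 1 := by simp [qpow]

theorem qpow_add (x y : ℤ) : qpow q (x + y) = qpow q x * qpow q y := by simp [qpow, zpow_add]

/-- The balanced Gaussian binomial coefficient `[N; s]`. It is defined by the Pascal rule, because
the quantum integers in its closed form need not be invertible in `R`. -/
def gaussBinom : ℕ → ℕ → R
  | _, 0 => 1
  | 0, _ + 1 => 0
  | N + 1, s + 1 => qpow q (s + 1) * gaussBinom N (s + 1) + qpow q (s - N) * gaussBinom N s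

theorem gaussBinom_zero_right (N : ℕ) : gaussBinom q N 0 = 1 := by simp [gaussBinom]

theorem gaussBinom_zero_succ (s : ℕ) : gaussBinom q 0 (s + 1) = 0 := by simp [gaussBinom]

theorem gaussBinom_succ_succ (N s : ℕ) :
    gaussBinom q (N + 1) (s + 1) =
      qpow q (s + 1) * gaussBinom q N (s + 1) + qpow q (s - N) * gaussBinom q N s := by
  rw [gaussBinom]

theorem gaussBinom_eq_zero_of_lt {N s : ℕ} (h : N < s) : gaussBinom q N s = 0 := by
  induction N generalizing s with
  | zero => obtain ⟨s, rfl⟩ := Nat.exists_eq_add_of_lt h; simp [gaussBinom]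
  | succ N ih =>
    obtain ⟨s, rfl⟩ := Nat.exists_eq_add_one.2 (Nat.zero_lt_of_lt h)
    rw [gaussBinom_succ_succ, ih (by omega), ih (by omega), mul_zero, mul_zero, add_zero]

theorem gaussBinom_self (N : ℕ) : gaussBinom q N N = 1 := by
  induction N with
  | zero => exact gaussBinom_zero_right q 0
  | succ N ih =>
    rw [gaussBinom_succ_succ, gaussBinom_eq_zero_of_lt q N.lt_succ_self, ih, sub_self, qpow_zero,
      mul_zero, zero_add, mul_one]

theorem gaussBinom_succ_succ' (N s : ℕ) :
    gaussBinom q (N + 1) (s + 1) =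
      qpow q (-(s + 1)) * gaussBinom q N (s + 1) + qpow q (N - s) * gaussBinom q N s := by
  induction N generalizing s with
  | zero =>
    rw [gaussBinom_succ_succ, gaussBinom_zero_succ]
    cases s with
    | zero => simp
    | succ s => simp [gaussBinom_zero_succ]
  | succ N ih =>
    have hmixed : qpow q (N + 1) * gaussBinom q N s + qpow q (s - N - 1) * gaussBinom q (N + 1) s =
        qpow q (-N - 1) * gaussBinom q N s + qpow q (N + 1 - s) * gaussBinom q (N + 1) s := by
      cases s with
      | zero => simp only [gaussBinom_zero_right]; ring_nf
      | succ s =>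
        nth_rw 1 [ih s]
        rw [gaussBinom_succ_succ q N s]
        simp only [mul_add, ← mul_assoc, ← qpow_add]
        push_cast
        ring_nf
    calc gaussBinom q (N + 1 + 1) (s + 1)
        = gaussBinom q N (s + 1) + (qpow q (N + 1) * gaussBinom q N s +
            qpow q (s - N - 1) * gaussBinom q (N + 1) s) := by
          rw [gaussBinom_succ_succ q (N + 1) s, ih s]
          simp only [mul_add, ← mul_assoc, ← qpow_add]
          push_cast
          ring_nf
          rw [qpow_zero, one_mul]
      _ = gaussBinom q N (s + 1) + (qpow q (-N - 1) * gaussBinom q N s +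
            qpow q (N + 1 - s) * gaussBinom q (N + 1) s) := by rw [hmixed]
      _ = _ := by
          rw [gaussBinom_succ_succ q N s]
          simp only [mul_add, ← mul_assoc, ← qpow_add]
          push_cast
          ring_nf
          rw [qpow_zero, mul_one]

/-- The balanced Gaussian binomial coefficient `[N; s]` for an arbitrary integer `N`, extended to
negative `N` by the reflection `[-N; s] = (-1) ^ s [N + s - 1; s]`. -/
def qBinom : ℤ → ℕ → R
  | Int.ofNat N, s => gaussBinom q N s
  | Int.negSucc N, s => (-1) ^ s * gaussBinom q (N + s) s

theorem qBinom_natCast (N s : ℕ) : qBinom q N s = gaussBinom q N s := rfl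

theorem qBinom_negSucc (N s : ℕ) :
    qBinom q (Int.negSucc N) s = (-1) ^ s * gaussBinom q (N + s) s := rfl

theorem qBinom_zero_right (N : ℤ) : qBinom q N 0 = 1 := by
  cases N <;> simp [qBinom, gaussBinom_zero_right]

theorem qBinom_zero_succ (s : ℕ) : qBinom q 0 (s + 1) = 0 := gaussBinom_zero_succ q s

theorem qBinom_succ_succ (N : ℤ) (s : ℕ) :
    qBinom q (N + 1) (s + 1) =
      qpow q (s + 1) * qBinom q N (s + 1) + qpow q (s - N) * qBinom q N s := by
  rcases N with N | _ | N
  · exact gaussBinom_succ_succ q N s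
  · change qBinom q 0 (s + 1) = _
    rw [qBinom_negSucc, qBinom_negSucc, Nat.zero_add, Nat.zero_add, gaussBinom_self,
      gaussBinom_self, qBinom_zero_succ, Int.negSucc_eq, Nat.cast_zero, zero_add, sub_neg_eq_add]
    ring
  · have hinv : qpow q (s + 1) * qpow q (-(s + 1)) = 1 := by
      rw [← qpow_add, add_neg_cancel, qpow_zero]
    have hshift : qpow q (s + 1) * qpow q ((N + (s + 1) : ℕ) - s) =
        qpow q (s - Int.negSucc (N + 1)) := by
      rw [← qpow_add, Int.negSucc_eq]; push_cast; ring_nf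
    change (-1) ^ (s + 1) * gaussBinom q (N + (s + 1)) (s + 1) = _
    rw [qBinom_negSucc, qBinom_negSucc, show N + 1 + (s + 1) = N + (s + 1) + 1 by ring,
      gaussBinom_succ_succ', show N + 1 + s = N + (s + 1) by ring]
    linear_combination (-1) ^ s * gaussBinom q (N + (s + 1)) (s + 1) * hinv +
      (-1) ^ s * gaussBinom q (N + (s + 1)) s * hshift

theorem sum_qBinom_succ_smul {M : Type*} [AddCommGroup M] [Module R M] (G : ℕ → M) {N : ℕ}
    (hG : G N = 0) (L : ℤ) :
    ∑ s ∈ Finset.range N, qBinom q (L + 1) s • G s =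
      ∑ s ∈ Finset.range N, (qpow q s * qBinom q L s) • G s +
        ∑ s ∈ Finset.range N, (qpow q (s - L) * qBinom q L s) • G (s + 1) := by
  have extend (f : ℕ → R) :
      ∑ s ∈ Finset.range N, f s • G s =
        ∑ s ∈ Finset.range N, f (s + 1) • G (s + 1) + f 0 • G 0 := by
    rw [← Finset.sum_range_succ' (fun s => f s • G s), Finset.sum_range_succ, hG, smul_zero,
      add_zero]
  rw [extend, extend]
  simp only [qBinom_succ_succ, qBinom_zero_right, add_smul, Finset.sum_add_distrib, Nat.cast_zero,
    qpow_zero, mul_one, Nat.cast_succ]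
  abel

end QuantumBinomial

section FunctionSubalgebra

variable {R : Type*} [CommRing R]

theorem exists_newton_expansion (p : ℕ → ℕ → R) (hself : ∀ s, p s s = 1)
    (hlt : ∀ x s, x < s → p x s = 0) (g : ℕ → R) (M : ℕ) :
    ∃ r : ℕ → R, ∀ x < M, g x = ∑ s ∈ Finset.range M, r s * p x s := by
  induction M with
  | zero => exact ⟨0, fun x hx => absurd hx x.not_lt_zero⟩
  | succ M ih =>
    obtain ⟨r, hr⟩ := ih
    set r' := Function.update r M (g M - ∑ s ∈ Finset.range M, r s * p M s) with hr'
    have hsum (x : ℕ) :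
        ∑ s ∈ Finset.range M, r' s * p x s = ∑ s ∈ Finset.range M, r s * p x s :=
      Finset.sum_congr rfl fun s hs => by
        rw [hr', Function.update_of_ne (Finset.mem_range.1 hs).ne]
    refine ⟨r', fun x hx => ?_⟩
    rw [Finset.sum_range_succ, hsum]
    rcases Nat.lt_succ_iff_lt_or_eq.1 hx with hx | rfl
    · rw [hlt x M hx, mul_zero, add_zero, hr x hx]
    · rw [hself, mul_one, hr', Function.update_self, add_sub_cancel]

variable {ι : Type*} (B : Subalgebra R (ι → R))

theorem qBinom_add_natCast_mem (q : Rˣ) (φ : ι → ℤ) (hK : (fun i => qpow q (-φ i)) ∈ B)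
    (hφ : ∀ s, (fun i => qBinom q (φ i) s) ∈ B) (N s : ℕ) :
    (fun i => qBinom q (φ i + N) s) ∈ B := by
  induction N generalizing s with
  | zero => simpa using hφ s
  | succ N ih =>
    rcases s with _ | s
    · simp only [qBinom_zero_right]
      exact one_mem B
    · have hpascal : (fun i => qBinom q (φ i + (N + 1 : ℕ)) (s + 1)) =
          qpow q (s + 1) • (fun i => qBinom q (φ i + N) (s + 1)) +
            qpow q (s - N) • ((fun i => qpow q (-φ i)) * fun i => qBinom q (φ i + N) s) := by
        ext i
        simp only [Pi.add_apply, Pi.smul_apply, Pi.mul_apply, smul_eq_mul]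
        rw [Nat.cast_succ, ← add_assoc, qBinom_succ_succ, ← mul_assoc, ← qpow_add]
        ring_nf
      rw [hpascal]
      exact add_mem (B.smul_mem (ih _) _) (B.smul_mem (mul_mem hK (ih _)) _)

variable [Finite ι]

theorem comp_mem_of_gaussBinom_comp_mem (q : Rˣ) (φ : ι → ℕ)
    (hφ : ∀ s, (fun i => gaussBinom q (φ i) s) ∈ B) (g : ℕ → R) : g ∘ φ ∈ B := by
  obtain ⟨M, hM⟩ := (Set.finite_range φ).bddAbove
  obtain ⟨r, hr⟩ := exists_newton_expansion (gaussBinom q) (gaussBinom_self q)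
    (fun _ _ => gaussBinom_eq_zero_of_lt q) g (M + 1)
  have hexpand : g ∘ φ = ∑ s ∈ Finset.range (M + 1), r s • fun i => gaussBinom q (φ i) s := by
    ext i
    simpa using hr (φ i) (Nat.lt_succ_of_le (hM (Set.mem_range_self i)))
  rw [hexpand]
  exact sum_mem fun s _ => B.smul_mem (hφ s) _

theorem comp_mem_of_qBinom_comp_mem (q : Rˣ) (φ : ι → ℤ) (hK : (fun i => qpow q (-φ i)) ∈ B)
    (hφ : ∀ s, (fun i => qBinom q (φ i) s) ∈ B) (g : ℤ → R) : g ∘ φ ∈ B := by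
  obtain ⟨x, hx⟩ := (Set.finite_range φ).bddBelow
  have hnonneg (i : ι) : φ i + x.natAbs = (φ i + x.natAbs).toNat := by
    have := hx (Set.mem_range_self i)
    omega
  have hmem := comp_mem_of_gaussBinom_comp_mem B q (fun i => (φ i + x.natAbs).toNat)
    (fun s => by
      simp only [← qBinom_natCast, ← hnonneg]
      exact qBinom_add_natCast_mem B q φ hK hφ _ s)
    (fun y => g (y - x.natAbs))
  simpa only [Function.comp_def, ← hnonneg, add_sub_cancel_right] using hmem

theorem mem_of_factorsThrough_pi {κ X : Type*} [Finite κ] (φ : κ → ι → X)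
    (hφ : ∀ k (g : X → R), g ∘ φ k ∈ B) {f : ι → R}
    (hf : Function.FactorsThrough f fun i k => φ k i) : f ∈ B := by
  classical
  cases nonempty_fintype ι
  cases nonempty_fintype κ
  obtain ⟨F, rfl⟩ := (Function.factorsThrough_iff f).1 hf
  have hfibres : (F ∘ fun i k => φ k i) = ∑ v ∈ Finset.univ.image fun i k => φ k i,
      F v • ∏ k, (fun x => if x = v k then (1 : R) else 0) ∘ φ k := by
    ext i
    have hfibre (v : κ → X) :
        (∏ k, if φ k i = v k then (1 : R) else 0) = if (fun k => φ k i) = v then 1 else 0 := by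
      simp [Finset.prod_ite_zero, funext_iff]
    simp [Finset.prod_apply, hfibre]
  rw [hfibres]
  exact sum_mem fun v _ => B.smul_mem (prod_mem fun k _ => hφ k _) _

end FunctionSubalgebra

section Diagonal

variable {R ι : Type*} [CommRing R] [Fintype ι] [DecidableEq ι]

/-- The algebra of diagonal operators on the free module with basis `ι`: a function `g` acts on
the basis vector indexed by `i` as the scalar `g i`. -/
noncomputable def diag : (ι → R) →ₐ[R] Module.End R (ι →₀ R) :=
  (Matrix.toLinAlgEquiv Finsupp.basisSingleOne).toAlgHom.comp (Matrix.diagonalAlgHom R)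

theorem diag_single (g : ι → R) (i : ι) (r : R) :
    diag g (Finsupp.single i r) = g i • Finsupp.single i r := by
  have hone : diag g (Finsupp.single i 1) = g i • Finsupp.single i 1 := by
    have h := Matrix.toLinAlgEquiv_self Finsupp.basisSingleOne (Matrix.diagonal g) i
    simpa [diag, Matrix.diagonal_apply] using h
  rw [← mul_one r, ← smul_eq_mul, ← Finsupp.smul_single, map_smul, hone, smul_comm]

end Diagonal

section Coweight

variable {n : ℕ}

/-- The simple coroot `h_a - h_b` of the pair `(a, b)`, so that `K_i` is `q ^ coroot i (i + 1)`. -/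
def coroot (a b : Fin n) : Fin n → ℤ := fun j => deltaZ a j - deltaZ b j

theorem linearMap_ext_coroot {M : Type*} [AddCommGroup M] [IsAddTorsionFree M]
    {f g : (Fin n → ℤ) →ₗ[ℤ] M}
    (hcoroot : ∀ (i : Fin n) (hi : (i : ℕ) + 1 < n),
      f (coroot i ⟨i + 1, hi⟩) = g (coroot i ⟨i + 1, hi⟩))
    (hone : f 1 = g 1) : f = g := by
  cases n with
  | zero => exact Subsingleton.elim f g
  | succ n =>
    set d : Fin (n + 1) → M := fun j => (f - g) (Pi.single j 1)
    have hstep (i : Fin n) : d i.castSucc = d i.succ := by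
      have hsingle : coroot i.castSucc i.succ = Pi.single i.castSucc 1 - Pi.single i.succ 1 := by
        ext j
        simp [coroot, deltaZ, Pi.single_apply]
      have h := sub_eq_zero.2 (hcoroot i.castSucc (by simp))
      change (f - g) (coroot i.castSucc i.succ) = 0 at h
      rwa [hsingle, map_sub, sub_eq_zero] at h
    have hconst (j : Fin (n + 1)) : d j = d 0 := by
      induction j using Fin.induction with
      | zero => rfl
      | succ i ih => rw [← hstep, ih]
    have hsum : (n + 1) • d 0 = 0 :=
      calc (n + 1) • d 0 = ∑ j, d j := by simp [hconst]
        _ = (f - g) 1 :=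
          (map_sum (f - g) _ _).symm.trans (congrArg (f - g) (Finset.univ_sum_single 1))
        _ = 0 := sub_eq_zero.2 hone
    have hzero : d 0 = 0 := (nsmul_eq_zero_iff_right n.succ_ne_zero).1 hsum
    refine LinearMap.pi_ext' fun j => LinearMap.ext_ring (sub_eq_zero.1 ?_)
    exact (hconst j).trans hzero

/-- The sign with which a coweight acts on a tensor factor: `1` on `V` (`ε = true`) and `-1` on
`V*` (`ε = false`). -/
def factorSign (ε : Bool) : ℤ := if ε then 1 else -1

/-- The weight of the basis vector indexed by `J`, as a functional on the coweight lattice: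
`q ^ h` multiplies that vector by `q ^ weight c J h`. -/
def weight {m : ℕ} (c : Fin m → Bool) (J : Fin m → Fin n) : (Fin n → ℤ) →ₗ[ℤ] ℤ :=
  ∑ t, factorSign (c t) • LinearMap.proj (J t)

theorem weight_apply {m : ℕ} (c : Fin m → Bool) (J : Fin m → Fin n) (h : Fin n → ℤ) :
    weight c J h = ∑ t, factorSign (c t) * h (J t) := by
  simp [weight]

theorem weight_cons {m : ℕ} (c : Fin (m + 1) → Bool) (j : Fin n) (J : Fin m → Fin n)
    (h : Fin n → ℤ) :
    weight c (Fin.cons j J : Fin (m + 1) → Fin n) h =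
      factorSign (c 0) * h j + weight (Fin.tail c) J h := by
  simp [weight_apply, Fin.sum_univ_succ, Fin.tail]

theorem weight_eq_of_coroot {m : ℕ} {c : Fin m → Bool} {J J' : Fin m → Fin n}
    (h : ∀ (i : Fin n) (hi : (i : ℕ) + 1 < n),
      weight c J (coroot i ⟨i + 1, hi⟩) = weight c J' (coroot i ⟨i + 1, hi⟩)) :
    weight c J = weight c J' :=
  linearMap_ext_coroot h (by simp [weight_apply])

end Coweight

section Factor

variable {R : Type*} [CommRing R] (q : Rˣ) {n : ℕ} (a b : Fin n)

/-- The index of the basis vector of weight `1` for the pair `(a, b)` in a tensor factor, which is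
`v_a` in `V` (`ε = true`) and the dual vector of `v_b` in `V*` (`ε = false`). -/
def topIdx (ε : Bool) (a b : Fin n) : Fin n := if ε then a else b

/-- The index of the basis vector of weight `-1` for the pair `(a, b)` in a tensor factor, which is
`v_b` in `V` (`ε = true`) and the dual vector of `v_a` in `V*` (`ε = false`). -/
def botIdx (ε : Bool) (a b : Fin n) : Fin n := if ε then b else a

/-- The coefficient with which `e` maps the basis vector at `botIdx` to the one at `topIdx` in a
tensor factor; `f` maps back with the inverse coefficient. -/
def raiseCoeff (ε : Bool) : Rˣ := if ε then 1 else -q⁻¹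

theorem singleE_zero (ε : Bool) (z : ℤ) (j : Fin n) :
    singleE R q n ε a b z 0 j =
      Finsupp.single j (qpow q (z * (factorSign ε * coroot a b j))) := by
  cases ε <;> simp [singleE, qpow, factorSign, coroot]

theorem singleF_zero (ε : Bool) (z : ℤ) (j : Fin n) :
    singleF R q n ε a b z 0 j =
      Finsupp.single j (qpow q (z * (factorSign ε * coroot a b j))) := by
  cases ε <;> simp [singleF, qpow, factorSign, coroot]

theorem singleE_one (ε : Bool) (z : ℤ) (j : Fin n) :
    singleE R q n ε a b z 1 j = Finsupp.single (topIdx ε a b)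
      (if j = botIdx ε a b then (raiseCoeff q ε : R) * qpow q z else 0) := by
  cases ε <;> split_ifs <;>
    simp_all [singleE, qpow, botIdx, topIdx, raiseCoeff, zpow_sub_one, mul_comm]

theorem singleF_one (ε : Bool) (z : ℤ) (j : Fin n) :
    singleF R q n ε a b z 1 j = Finsupp.single (botIdx ε a b)
      (if j = topIdx ε a b then (((raiseCoeff q ε)⁻¹ : Rˣ) : R) * qpow q z else 0) := by
  cases ε <;> split_ifs <;>
    simp_all [singleF, qpow, botIdx, topIdx, raiseCoeff, zpow_add_one, mul_comm]

theorem singleE_add_two (ε : Bool) (z : ℤ) (k : ℕ) (j : Fin n) :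
    singleE R q n ε a b z (k + 2) j = 0 := by
  cases ε <;> rfl

theorem singleF_add_two (ε : Bool) (z : ℤ) (k : ℕ) (j : Fin n) :
    singleF R q n ε a b z (k + 2) j = 0 := by
  cases ε <;> rfl

variable {a b}

theorem topIdx_ne_botIdx (hab : a ≠ b) (ε : Bool) : topIdx ε a b ≠ botIdx ε a b := by
  cases ε <;> simp [topIdx, botIdx, hab, hab.symm]

theorem factorSign_mul_topIdx (ε : Bool) (h : Fin n → ℤ) :
    factorSign ε * h (topIdx ε a b) = factorSign ε * h (botIdx ε a b) + (h a - h b) := by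
  cases ε
  · simp only [factorSign, topIdx, botIdx, Bool.false_eq_true, if_false]
    ring
  · simp [factorSign, topIdx, botIdx]

theorem factorSign_mul_coroot_topIdx (hab : a ≠ b) (ε : Bool) :
    factorSign ε * coroot a b (topIdx ε a b) = 1 := by
  cases ε <;> simp [factorSign, coroot, deltaZ, topIdx, hab, hab.symm]

theorem factorSign_mul_coroot_botIdx (hab : a ≠ b) (ε : Bool) :
    factorSign ε * coroot a b (botIdx ε a b) = -1 := by
  cases ε <;> simp [factorSign, coroot, deltaZ, botIdx, hab, hab.symm]

theorem coroot_eq_zero {ε : Bool} {j : Fin n} (htop : j ≠ topIdx ε a b) (hbot : j ≠ botIdx ε a b) :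
    coroot a b j = 0 := by
  cases ε <;> simp_all [coroot, deltaZ, topIdx, botIdx]

end Factor

section TensorSpace

variable {R : Type*} [CommRing R] (q : Rˣ) {n m : ℕ}

variable (R) in
/-- The embedding `x ↦ v_j ⊗ x` of an `m`-fold into an `(m + 1)`-fold tensor product. -/
noncomputable def consTensor (j : Fin n) : Mx R n m →ₗ[R] Mx R n (m + 1) :=
  Finsupp.lmapDomain R R (Fin.cons (α := fun _ => Fin n) j)

theorem consTensor_single (j : Fin n) (J : Fin m → Fin n) (r : R) :
    consTensor R j (Finsupp.single J r) =
      Finsupp.single (Fin.cons j J : Fin (m + 1) → Fin n) r := by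
  simp [consTensor]

theorem linearMap_ext_single {M : Type*} [AddCommGroup M] [Module R M] {f g : Mx R n m →ₗ[R] M}
    (h : ∀ J : Fin m → Fin n, f (Finsupp.single J 1) = g (Finsupp.single J 1)) : f = g :=
  Finsupp.lhom_ext' fun J => LinearMap.ext_ring (h J)

theorem linearMap_ext_consTensor {M : Type*} [AddCommGroup M] [Module R M]
    {f g : Mx R n (m + 1) →ₗ[R] M}
    (h : ∀ (j : Fin n) (x : Mx R n m), f (consTensor R j x) = g (consTensor R j x)) : f = g := by
  refine linearMap_ext_single fun J => ?_
  simpa only [consTensor_single, Fin.cons_self_tail] using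
    h (J 0) (Finsupp.single (Fin.tail J) 1)

theorem opH_eq_diag (c : Fin m → Bool) (h : Fin n → ℤ) :
    opH R q n m c h = diag fun J => qpow q (weight c J h) := by
  refine linearMap_ext_single fun J => ?_
  simp [opH, diag_single, weight_apply, factorSign, qpow]

theorem opH_single (c : Fin m → Bool) (h : Fin n → ℤ) (J : Fin m → Fin n) :
    opH R q n m c h (Finsupp.single J 1) = qpow q (weight c J h) • Finsupp.single J 1 := by
  rw [opH_eq_diag, diag_single]

theorem opH_opH (c : Fin m → Bool) (h h' : Fin n → ℤ) (x : Mx R n m) :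
    opH R q n m c h (opH R q n m c h' x) = opH R q n m c (h + h') x := by
  suffices hcomp : opH R q n m c h ∘ₗ opH R q n m c h' = opH R q n m c (h + h') from
    LinearMap.congr_fun hcomp x
  refine linearMap_ext_single fun J => ?_
  rw [LinearMap.comp_apply, opH_single, opH_single, map_smul, opH_single, smul_smul, map_add,
    qpow_add, mul_comm]

theorem opH_consTensor (c : Fin (m + 1) → Bool) (h : Fin n → ℤ) (j : Fin n) (x : Mx R n m) :
    opH R q n (m + 1) c h (consTensor R j x) =
      qpow q (factorSign (c 0) * h j) • consTensor R j (opH R q n m (Fin.tail c) h x) := by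
  suffices hcomp : opH R q n (m + 1) c h ∘ₗ consTensor R j =
      qpow q (factorSign (c 0) * h j) • consTensor R j ∘ₗ opH R q n m (Fin.tail c) h from
    LinearMap.congr_fun hcomp x
  refine linearMap_ext_single fun J => ?_
  simp only [LinearMap.comp_apply, LinearMap.smul_apply, opH_single, consTensor_single,
    weight_cons, qpow_add, map_smul, smul_smul]

end TensorSpace

section DividedPowers

variable {R : Type*} [CommRing R] (q : Rˣ) {n m : ℕ} (a b : Fin n)

theorem opE_consTensor_single (c : Fin (m + 1) → Bool) (z : ℤ) (k : ℕ) (j : Fin n)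
    (J : Fin m → Fin n) :
    opE R q n a b (m + 1) c z k (consTensor R j (Finsupp.single J 1)) =
      ∑ t ∈ Finset.range (k + 1), ((q ^ (t * (k - t)) : Rˣ) : R) •
        (singleE R q n (c 0) a b z (k - t) j).sum fun j' r =>
          r • consTensor R j'
            (opE R q n a b m (Fin.tail c) (z + t - k) t (Finsupp.single J 1)) := by
  rw [consTensor_single, opE, Finsupp.linearCombination_single, one_smul]
  rfl

theorem opF_consTensor_single (c : Fin (m + 1) → Bool) (z : ℤ) (k : ℕ) (j : Fin n)
    (J : Fin m → Fin n) :
    opF R q n a b (m + 1) c z k (consTensor R j (Finsupp.single J 1)) =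
      ∑ t ∈ Finset.range (k + 1), ((q ^ (-(t * (k - t) : ℤ)) : Rˣ) : R) •
        (singleF R q n (c 0) a b (z + t) (k - t) j).sum fun j' r =>
          r • consTensor R j' (opF R q n a b m (Fin.tail c) z t (Finsupp.single J 1)) := by
  rw [consTensor_single, opF, Finsupp.linearCombination_single, one_smul]
  rfl

theorem opE_zero_consTensor (c : Fin (m + 1) → Bool) (z : ℤ) (j : Fin n) (x : Mx R n m) :
    opE R q n a b (m + 1) c z 0 (consTensor R j x) =
      qpow q (z * (factorSign (c 0) * coroot a b j)) •
        consTensor R j (opE R q n a b m (Fin.tail c) z 0 x) := by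
  suffices hcomp : opE R q n a b (m + 1) c z 0 ∘ₗ consTensor R j =
      qpow q (z * (factorSign (c 0) * coroot a b j)) •
        consTensor R j ∘ₗ opE R q n a b m (Fin.tail c) z 0 from
    LinearMap.congr_fun hcomp x
  refine linearMap_ext_single fun J => ?_
  simp [opE_consTensor_single, singleE_zero]

theorem opE_succ_consTensor (c : Fin (m + 1) → Bool) (z : ℤ) (k : ℕ) (j : Fin n) (x : Mx R n m) :
    opE R q n a b (m + 1) c z (k + 1) (consTensor R j x) =
      qpow q (z * (factorSign (c 0) * coroot a b j)) •
          consTensor R j (opE R q n a b m (Fin.tail c) z (k + 1) x) +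
        (if j = botIdx (c 0) a b then (raiseCoeff q (c 0) : R) * qpow q (k + z) else 0) •
          consTensor R (topIdx (c 0) a b) (opE R q n a b m (Fin.tail c) (z - 1) k x) := by
  suffices hcomp : opE R q n a b (m + 1) c z (k + 1) ∘ₗ consTensor R j =
      qpow q (z * (factorSign (c 0) * coroot a b j)) •
          consTensor R j ∘ₗ opE R q n a b m (Fin.tail c) z (k + 1) +
        (if j = botIdx (c 0) a b then (raiseCoeff q (c 0) : R) * qpow q (k + z) else 0) •
          consTensor R (topIdx (c 0) a b) ∘ₗ opE R q n a b m (Fin.tail c) (z - 1) k from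
    LinearMap.congr_fun hcomp x
  refine linearMap_ext_single fun J => ?_
  rw [LinearMap.comp_apply, opE_consTensor_single, Finset.sum_range_succ, Finset.sum_range_succ,
    Finset.sum_eq_zero, zero_add]
  · refine (add_comm _ _).trans ?_
    congr 1
    · simp [singleE_zero]
    · have hscalar : ((q ^ (k * 1) : Rˣ) : R) = qpow q k := by simp [qpow]
      rw [Nat.add_sub_cancel_left, singleE_one, Finsupp.sum_single_index (by simp), smul_smul,
        hscalar, mul_ite, mul_zero, mul_left_comm, ← qpow_add,
        show z + k - ((k + 1 : ℕ) : ℤ) = z - 1 by push_cast; ring]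
      rfl
  · intro t ht
    obtain ⟨d, hd⟩ := Nat.exists_eq_add_of_lt (Finset.mem_range.1 ht)
    rw [show k + 1 - t = d + 2 by omega, singleE_add_two]
    simp

theorem opF_succ_consTensor (c : Fin (m + 1) → Bool) (k : ℕ) (j : Fin n) (x : Mx R n m) :
    opF R q n a b (m + 1) c 0 (k + 1) (consTensor R j x) =
      qpow q ((k + 1) * (factorSign (c 0) * coroot a b j)) •
          consTensor R j (opF R q n a b m (Fin.tail c) 0 (k + 1) x) +
        (if j = topIdx (c 0) a b then (((raiseCoeff q (c 0))⁻¹ : Rˣ) : R) else 0) •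
          consTensor R (botIdx (c 0) a b) (opF R q n a b m (Fin.tail c) 0 k x) := by
  suffices hcomp : opF R q n a b (m + 1) c 0 (k + 1) ∘ₗ consTensor R j =
      qpow q ((k + 1) * (factorSign (c 0) * coroot a b j)) •
          consTensor R j ∘ₗ opF R q n a b m (Fin.tail c) 0 (k + 1) +
        (if j = topIdx (c 0) a b then (((raiseCoeff q (c 0))⁻¹ : Rˣ) : R) else 0) •
          consTensor R (botIdx (c 0) a b) ∘ₗ opF R q n a b m (Fin.tail c) 0 k from
    LinearMap.congr_fun hcomp x
  refine linearMap_ext_single fun J => ?_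
  rw [LinearMap.comp_apply, opF_consTensor_single, Finset.sum_range_succ, Finset.sum_range_succ,
    Finset.sum_eq_zero, zero_add]
  · refine (add_comm _ _).trans ?_
    congr 1
    · simp [singleF_zero]
    · have hscalar : ((q ^ (-(k * ((k + 1 : ℕ) - k)) : ℤ) : Rˣ) : R) = qpow q (-k) := by
        simp [qpow]
      rw [hscalar, Nat.add_sub_cancel_left, singleF_one, Finsupp.sum_single_index (by simp),
        smul_smul, mul_ite, mul_zero, mul_left_comm, ← qpow_add, zero_add, neg_add_cancel,
        qpow_zero, mul_one]
      rfl
  · intro t ht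
    obtain ⟨d, hd⟩ := Nat.exists_eq_add_of_lt (Finset.mem_range.1 ht)
    rw [show k + 1 - t = d + 2 by omega, singleF_add_two]
    simp

theorem opF_zero_consTensor (c : Fin (m + 1) → Bool) (j : Fin n) (x : Mx R n m) :
    opF R q n a b (m + 1) c 0 0 (consTensor R j x) =
      consTensor R j (opF R q n a b m (Fin.tail c) 0 0 x) := by
  suffices hcomp : opF R q n a b (m + 1) c 0 0 ∘ₗ consTensor R j =
      consTensor R j ∘ₗ opF R q n a b m (Fin.tail c) 0 0 from LinearMap.congr_fun hcomp x
  refine linearMap_ext_single fun J => ?_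
  simp [opF_consTensor_single, singleF_zero, qpow_zero]

theorem opH_fin_zero (c : Fin 0 → Bool) (h : Fin n → ℤ) : opH R q n 0 c h = LinearMap.id := by
  refine linearMap_ext_single fun J => ?_
  simp [opH_single, weight_apply, qpow_zero]

variable {a b}

theorem opE_eq_opH_opE (hab : a ≠ b) (c : Fin m → Bool) (z : ℤ) (k : ℕ) (x : Mx R n m) :
    opE R q n a b m c z k x = opH R q n m c (z • coroot a b) (opE R q n a b m c 0 k x) := by
  induction m generalizing z k with
  | zero => rw [opH_fin_zero]; rfl
  | succ m ih =>
    suffices hcomp : opE R q n a b (m + 1) c z k =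
        opH R q n (m + 1) c (z • coroot a b) ∘ₗ opE R q n a b (m + 1) c 0 k from
      LinearMap.congr_fun hcomp x
    refine linearMap_ext_consTensor fun j x => ?_
    have hj : factorSign (c 0) * (z • coroot a b) j = z * (factorSign (c 0) * coroot a b j) := by
      rw [Pi.smul_apply, smul_eq_mul, mul_left_comm]
    have htop : factorSign (c 0) * (z • coroot a b) (topIdx (c 0) a b) = z := by
      rw [Pi.smul_apply, smul_eq_mul, mul_left_comm, factorSign_mul_coroot_topIdx hab, mul_one]
    rw [LinearMap.comp_apply]
    cases k with
    | zero =>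
      rw [opE_zero_consTensor, opE_zero_consTensor, ih _ z, zero_mul, qpow_zero, one_smul,
        opH_consTensor, hj]
    | succ k =>
      rw [opE_succ_consTensor, opE_succ_consTensor, ih _ z, ih _ (z - 1), ih _ (0 - 1), map_add,
        map_smul, map_smul, opH_consTensor, opH_consTensor, hj, htop, opH_opH, ← add_smul,
        zero_mul, qpow_zero, one_smul, zero_sub, ← sub_eq_add_neg, smul_smul, ite_mul, zero_mul,
        mul_assoc, ← qpow_add, add_zero]

end DividedPowers

section IntegerIndexed

variable {R : Type*} [CommRing R] (q : Rˣ) {n m : ℕ} {a b : Fin n}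

/-- The divided power `ρ(e ^ (k))` for the pair `(a, b)`, set to `0` for `k < 0` so that index
shifts in the commutation formula need no case distinction. -/
noncomputable def rhoE (a b : Fin n) (c : Fin m → Bool) : ℤ → Module.End R (Mx R n m)
  | .ofNat k => opE R q n a b m c 0 k
  | .negSucc _ => 0

/-- The divided power `ρ(f ^ (k))` for the pair `(a, b)`, set to `0` for `k < 0` as in `rhoE`. -/
noncomputable def rhoF (a b : Fin n) (c : Fin m → Bool) : ℤ → Module.End R (Mx R n m)
  | .ofNat k => opF R q n a b m c 0 k
  | .negSucc _ => 0

theorem rhoE_natCast (c : Fin m → Bool) (k : ℕ) :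
    rhoE q a b c k = opE R q n a b m c 0 k := rfl

theorem rhoF_natCast (c : Fin m → Bool) (k : ℕ) :
    rhoF q a b c k = opF R q n a b m c 0 k := rfl

theorem rhoE_of_neg (c : Fin m → Bool) {k : ℤ} (hk : k < 0) : rhoE q a b c k = 0 := by
  cases k with
  | ofNat k => exact absurd hk (by simp)
  | negSucc k => rfl

theorem rhoF_of_neg (c : Fin m → Bool) {k : ℤ} (hk : k < 0) : rhoF q a b c k = 0 := by
  cases k with
  | ofNat k => exact absurd hk (by simp)
  | negSucc k => rfl

theorem rhoE_fin_zero (c : Fin 0 → Bool) (k : ℤ) :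
    rhoE q a b c k = if k = 0 then LinearMap.id else 0 := by
  cases k <;> simp [rhoE, opE]

theorem rhoF_fin_zero (c : Fin 0 → Bool) (k : ℤ) :
    rhoF q a b c k = if k = 0 then LinearMap.id else 0 := by
  cases k <;> simp [rhoF, opF]

theorem rhoE_consTensor (hab : a ≠ b) (c : Fin (m + 1) → Bool) (k : ℤ) (j : Fin n)
    (x : Mx R n m) :
    rhoE q a b c k (consTensor R j x) =
      consTensor R j (rhoE q a b (Fin.tail c) k x) +
        (if j = botIdx (c 0) a b then (raiseCoeff q (c 0) : R) * qpow q (k - 1) else 0) •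
          consTensor R (topIdx (c 0) a b)
            (opH R q n m (Fin.tail c) (-coroot a b) (rhoE q a b (Fin.tail c) (k - 1) x)) := by
  rcases k with (_ | k) | k
  · rw [rhoE_of_neg q (Fin.tail c) (by simp : Int.ofNat 0 - 1 < 0)]
    simp [rhoE, opE_zero_consTensor, qpow_zero]
  · have hpred : Int.ofNat (k + 1) - 1 = k := by simp
    rw [hpred, rhoE_natCast]
    simp [rhoE, opE_succ_consTensor, qpow_zero, opE_eq_opH_opE q hab _ (-1)]
  · have hpred : Int.negSucc k - 1 = Int.negSucc (k + 1) := rfl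
    simp [rhoE, hpred]

theorem rhoF_consTensor (c : Fin (m + 1) → Bool) (k : ℤ) (j : Fin n) (x : Mx R n m) :
    rhoF q a b c k (consTensor R j x) =
      qpow q (k * (factorSign (c 0) * coroot a b j)) •
          consTensor R j (rhoF q a b (Fin.tail c) k x) +
        (if j = topIdx (c 0) a b then (((raiseCoeff q (c 0))⁻¹ : Rˣ) : R) else 0) •
          consTensor R (botIdx (c 0) a b) (rhoF q a b (Fin.tail c) (k - 1) x) := by
  rcases k with (_ | k) | k
  · rw [rhoF_of_neg q (Fin.tail c) (by simp : Int.ofNat 0 - 1 < 0)]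
    simp [rhoF, opF_zero_consTensor, qpow_zero]
  · have hpred : Int.ofNat (k + 1) - 1 = k := by simp
    rw [hpred, rhoF_natCast]
    simp [rhoF, opF_succ_consTensor]
  · have hpred : Int.negSucc k - 1 = Int.negSucc (k + 1) := rfl
    simp [rhoF, hpred]

theorem rhoE_zero (hab : a ≠ b) (c : Fin m → Bool) : rhoE q a b c 0 = LinearMap.id := by
  induction m with
  | zero => simp [rhoE_fin_zero]
  | succ m ih =>
    refine linearMap_ext_consTensor fun j x => ?_
    simp [rhoE_consTensor q hab, ih, rhoE_of_neg]

theorem rhoF_zero (c : Fin m → Bool) : rhoF q a b c 0 = LinearMap.id := by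
  induction m with
  | zero => simp [rhoF_fin_zero]
  | succ m ih =>
    refine linearMap_ext_consTensor fun j x => ?_
    simp [rhoF_consTensor, ih, rhoF_of_neg, qpow_zero]

theorem opH_rhoE (hab : a ≠ b) (c : Fin m → Bool) (h : Fin n → ℤ) (k : ℤ) (x : Mx R n m) :
    opH R q n m c h (rhoE q a b c k x) =
      qpow q (k * (h a - h b)) • rhoE q a b c k (opH R q n m c h x) := by
  induction m generalizing k with
  | zero =>
    rcases eq_or_ne k 0 with rfl | hk
    · simp [opH_fin_zero, qpow_zero]
    · simp [rhoE_fin_zero, hk]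
  | succ m ih =>
    suffices hcomp : opH R q n (m + 1) c h ∘ₗ rhoE q a b c k =
        qpow q (k * (h a - h b)) • rhoE q a b c k ∘ₗ opH R q n (m + 1) c h from
      LinearMap.congr_fun hcomp x
    refine linearMap_ext_consTensor fun j x => ?_
    have hcomm (y : Mx R n m) :
        opH R q n m (Fin.tail c) h (opH R q n m (Fin.tail c) (-coroot a b) y) =
          opH R q n m (Fin.tail c) (-coroot a b) (opH R q n m (Fin.tail c) h y) := by
      rw [opH_opH, opH_opH, add_comm h]
    simp only [LinearMap.comp_apply, LinearMap.smul_apply, rhoE_consTensor q hab, map_add,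
      map_smul, opH_consTensor, hcomm, ih, smul_add, smul_smul]
    refine congrArg₂ (· + ·) (by rw [mul_comm]) ?_
    split_ifs with hj
    · have hexp : qpow q (factorSign (c 0) * h (topIdx (c 0) a b)) *
            qpow q ((k - 1) * (h a - h b)) =
          qpow q (k * (h a - h b)) * qpow q (factorSign (c 0) * h j) := by
        rw [← qpow_add, ← qpow_add, factorSign_mul_topIdx, hj]
        ring_nf
      congr 1
      linear_combination (raiseCoeff q (c 0) : R) * qpow q (k - 1) * hexp
    · simp

theorem opH_rhoF (c : Fin m → Bool) (h : Fin n → ℤ) (k : ℤ) (x : Mx R n m) :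
    opH R q n m c h (rhoF q a b c k x) =
      qpow q (-k * (h a - h b)) • rhoF q a b c k (opH R q n m c h x) := by
  induction m generalizing k with
  | zero =>
    rcases eq_or_ne k 0 with rfl | hk
    · simp [opH_fin_zero, qpow_zero]
    · simp [rhoF_fin_zero, hk]
  | succ m ih =>
    suffices hcomp : opH R q n (m + 1) c h ∘ₗ rhoF q a b c k =
        qpow q (-k * (h a - h b)) • rhoF q a b c k ∘ₗ opH R q n (m + 1) c h from
      LinearMap.congr_fun hcomp x
    refine linearMap_ext_consTensor fun j x => ?_
    simp only [LinearMap.comp_apply, LinearMap.smul_apply, rhoF_consTensor, map_add,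
      map_smul, opH_consTensor, ih, smul_add, smul_smul]
    refine congrArg₂ (· + ·) (by congr 1; ring) ?_
    split_ifs with hj
    · have hexp : qpow q (factorSign (c 0) * h (botIdx (c 0) a b)) *
            qpow q (-(k - 1) * (h a - h b)) =
          qpow q (-k * (h a - h b)) * qpow q (factorSign (c 0) * h j) := by
        rw [← qpow_add, ← qpow_add, hj, factorSign_mul_topIdx]
        ring_nf
      congr 1
      linear_combination (((raiseCoeff q (c 0))⁻¹ : Rˣ) : R) * hexp
    · simp

end IntegerIndexed

section Commutation

variable {R : Type*} [CommRing R] (q : Rˣ) {n m : ℕ} {a b : Fin n} {c : Fin m → Bool}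

theorem coroot_apply_sub_apply (hab : a ≠ b) : coroot a b a - coroot a b b = 2 := by
  simp [coroot, deltaZ, hab, hab.symm]

theorem opH_neg_coroot_rhoF (hab : a ≠ b) {x : Mx R n m} {w : ℤ}
    (hx : opH R q n m c (-coroot a b) x = qpow q (-w) • x) (l : ℤ) :
    opH R q n m c (-coroot a b) (rhoF q a b c l x) =
      qpow q (-(w - 2 * l)) • rhoF q a b c l x := by
  have hexp : -l * ((-coroot a b) a - (-coroot a b) b) + -w = -(w - 2 * l) := by
    rw [Pi.neg_apply, Pi.neg_apply]
    linear_combination l * coroot_apply_sub_apply hab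
  rw [opH_rhoF, hx, map_smul, smul_smul, ← qpow_add, hexp]

theorem rhoE_consTensor_topIdx (hab : a ≠ b) (c : Fin (m + 1) → Bool) (k : ℤ) (x : Mx R n m) :
    rhoE q a b c k (consTensor R (topIdx (c 0) a b) x) =
      consTensor R (topIdx (c 0) a b) (rhoE q a b (Fin.tail c) k x) := by
  simp [rhoE_consTensor q hab, topIdx_ne_botIdx hab]

theorem rhoE_consTensor_botIdx (hab : a ≠ b) {c : Fin (m + 1) → Bool} {x : Mx R n m} {w : ℤ}
    (hx : opH R q n m (Fin.tail c) (-coroot a b) x = qpow q (-w) • x) (k : ℤ) :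
    rhoE q a b c k (consTensor R (botIdx (c 0) a b) x) =
      consTensor R (botIdx (c 0) a b) (rhoE q a b (Fin.tail c) k x) +
        ((raiseCoeff q (c 0) : R) * qpow q (1 - w - k)) •
          consTensor R (topIdx (c 0) a b) (rhoE q a b (Fin.tail c) (k - 1) x) := by
  have hexp : k - 1 + ((k - 1) * ((-coroot a b) a - (-coroot a b) b) + -w) = 1 - w - k := by
    rw [Pi.neg_apply, Pi.neg_apply]
    linear_combination (1 - k) * coroot_apply_sub_apply hab
  rw [rhoE_consTensor q hab, opH_rhoE q hab, hx, if_pos rfl]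
  simp only [map_smul, smul_smul, mul_assoc, ← qpow_add, hexp]

theorem rhoF_consTensor_topIdx (hab : a ≠ b) (c : Fin (m + 1) → Bool) (l : ℤ) (x : Mx R n m) :
    rhoF q a b c l (consTensor R (topIdx (c 0) a b) x) =
      qpow q l • consTensor R (topIdx (c 0) a b) (rhoF q a b (Fin.tail c) l x) +
        (((raiseCoeff q (c 0))⁻¹ : Rˣ) : R) •
          consTensor R (botIdx (c 0) a b) (rhoF q a b (Fin.tail c) (l - 1) x) := by
  simp [rhoF_consTensor, factorSign_mul_coroot_topIdx hab]

theorem rhoF_consTensor_botIdx (hab : a ≠ b) (c : Fin (m + 1) → Bool) (l : ℤ) (x : Mx R n m) :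
    rhoF q a b c l (consTensor R (botIdx (c 0) a b) x) =
      qpow q (-l) • consTensor R (botIdx (c 0) a b) (rhoF q a b (Fin.tail c) l x) := by
  simp [rhoF_consTensor, factorSign_mul_coroot_botIdx hab, (topIdx_ne_botIdx hab (c 0)).symm]

/-- The commutation formula
`e ^ (k) f ^ (l) = ∑ s, f ^ (l - s) [k - l + w; s] e ^ (k - s)` on a vector `x` of weight `w`.
The cut-off `N` is arbitrary, since the terms with `s > k` vanish. -/
def CommutesOn (q : Rˣ) (a b : Fin n) (c : Fin m → Bool) (w : ℤ) (x : Mx R n m) : Prop :=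
  ∀ (N : ℕ) (k l : ℤ), k < N →
    rhoE q a b c k (rhoF q a b c l x) =
      ∑ s ∈ Finset.range N, qBinom q (k - l + w) s •
        rhoF q a b c (l - s) (rhoE q a b c (k - s) x)

theorem commutesOn_fin_zero (c : Fin 0 → Bool) (x : Mx R n 0) : CommutesOn q a b c 0 x := by
  intro N k l hkN
  simp only [rhoE_fin_zero, rhoF_fin_zero]
  rw [Finset.sum_eq_single 0]
  · rw [qBinom_zero_right, one_smul, Nat.cast_zero, sub_zero, sub_zero]
    split_ifs <;> rfl
  · intro s _ hs
    obtain ⟨s, rfl⟩ := Nat.exists_eq_succ_of_ne_zero hs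
    rcases eq_or_ne k (s.succ : ℤ) with rfl | hk
    · rcases eq_or_ne l (s.succ : ℤ) with rfl | hl
      · rw [sub_self, zero_add, qBinom_zero_succ, zero_smul]
      · rw [if_neg (sub_ne_zero.2 hl), LinearMap.zero_apply, smul_zero]
    · rw [if_neg (sub_ne_zero.2 hk), LinearMap.zero_apply, map_zero, smul_zero]
  · intro hN
    have hk : k - (0 : ℕ) ≠ 0 := by
      rw [Finset.mem_range, not_lt, Nat.le_zero] at hN
      omega
    rw [if_neg hk, LinearMap.zero_apply, map_zero, smul_zero]

variable {x : Mx R n m} {w : ℤ}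

theorem CommutesOn.smul_add_smul_eq_sum (h : CommutesOn q a b c w x) {N : ℕ} {k : ℤ} (hkN : k < N)
    (l : ℤ) :
    qpow q l • rhoE q a b c k (rhoF q a b c l x) +
        qpow q (2 * l - 1 - k - w) • rhoE q a b c (k - 1) (rhoF q a b c (l - 1) x) =
      ∑ s ∈ Finset.range N, qBinom q (k - l + w + 1) s •
        qpow q (l - s) • rhoF q a b c (l - s) (rhoE q a b c (k - s) x) := by
  have hlast : qpow q (l - N) • rhoF q a b c (l - N) (rhoE q a b c (k - N) x) = 0 := by
    rw [rhoE_of_neg q c (by omega), LinearMap.zero_apply, map_zero, smul_zero]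
  have hshift (t : ℤ) (s : ℕ) : t - (s + 1 : ℕ) = t - 1 - s := by push_cast; ring
  have hL : k - 1 - (l - 1) + w = k - l + w := by ring
  rw [sum_qBinom_succ_smul q (fun s : ℕ => qpow q (l - s) •
    rhoF q a b c (l - s) (rhoE q a b c (k - s) x)) hlast, h N k l hkN,
    h N (k - 1) (l - 1) (by omega), hL, Finset.smul_sum, Finset.smul_sum]
  simp only [hshift, smul_smul]
  congr! 3
  · rw [mul_right_comm, ← qpow_add, add_sub_cancel]
  · rw [mul_right_comm, ← qpow_add]
    ring_nf

theorem CommutesOn.smul_eq_sum (h : CommutesOn q a b c w x) {N : ℕ} {k : ℤ} (hkN : k < N) (l : ℤ) :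
    qpow q (-l) • rhoE q a b c k (rhoF q a b c l x) =
      ∑ s ∈ Finset.range N, qBinom q (k - l + w - 1) s •
        (qpow q (s - l) • rhoF q a b c (l - s) (rhoE q a b c (k - s) x) +
          qpow q (s + 1 - w - k) • rhoF q a b c (l - s - 1) (rhoE q a b c (k - s - 1) x)) := by
  have hlast : qpow q (-l) • rhoF q a b c (l - N) (rhoE q a b c (k - N) x) = 0 := by
    rw [rhoE_of_neg q c (by omega), LinearMap.zero_apply, map_zero, smul_zero]
  have hshift (t : ℤ) (s : ℕ) : t - (s + 1 : ℕ) = t - s - 1 := by push_cast; ring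
  have hpascal := sum_qBinom_succ_smul q (fun s : ℕ => qpow q (-l) •
    rhoF q a b c (l - s) (rhoE q a b c (k - s) x)) hlast (k - l + w - 1)
  rw [h N k l hkN, Finset.smul_sum]
  simp only [smul_comm (qpow q (-l)), smul_add, Finset.sum_add_distrib]
  rw [sub_add_cancel] at hpascal
  rw [hpascal]
  simp only [hshift, smul_smul]
  congr! 3
  · rw [mul_right_comm, ← qpow_add, mul_comm, ← sub_eq_add_neg]
  · rw [mul_right_comm, ← qpow_add, mul_comm]
    ring_nf

variable {c : Fin (m + 1) → Bool}

theorem CommutesOn.consTensor_topIdx (hab : a ≠ b)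
    (hx : opH R q n m (Fin.tail c) (-coroot a b) x = qpow q (-w) • x)
    (h : CommutesOn q a b (Fin.tail c) w x) :
    CommutesOn q a b c (1 + w) (consTensor R (topIdx (c 0) a b) x) := by
  intro N k l hkN
  have hEF : rhoE q a b c k
        (consTensor R (botIdx (c 0) a b) (rhoF q a b (Fin.tail c) (l - 1) x)) =
      consTensor R (botIdx (c 0) a b)
          (rhoE q a b (Fin.tail c) k (rhoF q a b (Fin.tail c) (l - 1) x)) +
        ((raiseCoeff q (c 0) : R) * qpow q (2 * l - 1 - k - w)) •
          consTensor R (topIdx (c 0) a b)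
            (rhoE q a b (Fin.tail c) (k - 1) (rhoF q a b (Fin.tail c) (l - 1) x)) := by
    rw [rhoE_consTensor_botIdx q hab (opH_neg_coroot_rhoF q hab hx _)]
    ring_nf
  have hL : k - (l - 1) + w = k - l + w + 1 := by ring
  have hL' : k - l + (1 + w) = k - l + w + 1 := by ring
  calc rhoE q a b c k (rhoF q a b c l (consTensor R (topIdx (c 0) a b) x))
      = consTensor R (topIdx (c 0) a b)
          (qpow q l • rhoE q a b (Fin.tail c) k (rhoF q a b (Fin.tail c) l x) +
            qpow q (2 * l - 1 - k - w) •
              rhoE q a b (Fin.tail c) (k - 1) (rhoF q a b (Fin.tail c) (l - 1) x)) +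
        (((raiseCoeff q (c 0))⁻¹ : Rˣ) : R) • consTensor R (botIdx (c 0) a b)
          (rhoE q a b (Fin.tail c) k (rhoF q a b (Fin.tail c) (l - 1) x)) := by
        rw [rhoF_consTensor_topIdx q hab, map_add, map_smul, map_smul,
          rhoE_consTensor_topIdx q hab, hEF, map_add, map_smul, map_smul, smul_add, smul_smul,
          Units.inv_mul_cancel_left]
        abel
    _ = _ := by
        rw [h.smul_add_smul_eq_sum q hkN, h N k (l - 1) hkN, hL, hL']
        simp only [rhoE_consTensor_topIdx q hab, rhoF_consTensor_topIdx q hab, map_sum, map_smul,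
          smul_add, Finset.sum_add_distrib, Finset.smul_sum, sub_right_comm l,
          smul_comm (((raiseCoeff q (c 0))⁻¹ : Rˣ) : R)]

theorem CommutesOn.consTensor_botIdx (hab : a ≠ b)
    (hx : opH R q n m (Fin.tail c) (-coroot a b) x = qpow q (-w) • x)
    (h : CommutesOn q a b (Fin.tail c) w x) :
    CommutesOn q a b c (-1 + w) (consTensor R (botIdx (c 0) a b) x) := by
  intro N k l hkN
  have hEF := rhoE_consTensor_botIdx q hab (opH_neg_coroot_rhoF q hab hx l) k
  have hFE (s : ℕ) : rhoF q a b c (l - s) (rhoE q a b c (k - s)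
        (consTensor R (botIdx (c 0) a b) x)) =
      consTensor R (botIdx (c 0) a b)
          (qpow q (s - l) • rhoF q a b (Fin.tail c) (l - s) (rhoE q a b (Fin.tail c) (k - s) x) +
            qpow q (s + 1 - w - k) •
              rhoF q a b (Fin.tail c) (l - s - 1) (rhoE q a b (Fin.tail c) (k - s - 1) x)) +
        ((raiseCoeff q (c 0) : R) * qpow q (l + 1 - w - k)) •
          consTensor R (topIdx (c 0) a b)
            (rhoF q a b (Fin.tail c) (l - s) (rhoE q a b (Fin.tail c) (k - s - 1) x)) := by
    have hneg : -(l - s : ℤ) = s - l := neg_sub _ _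
    have hbot : 1 - w - (k - s) = s + 1 - w - k := by ring
    have htop : 1 - w - (k - s) + (l - s) = l + 1 - w - k := by ring
    rw [rhoE_consTensor_botIdx q hab hx, map_add, map_smul, rhoF_consTensor_botIdx q hab,
      rhoF_consTensor_topIdx q hab, map_add, map_smul, map_smul, smul_add, smul_smul, smul_smul,
      mul_right_comm _ _ (((raiseCoeff q (c 0))⁻¹ : Rˣ) : R), Units.mul_inv, one_mul, mul_assoc,
      ← qpow_add, hneg, htop, hbot]
    abel
  have hL : k - 1 - l + w = k - l + w - 1 := by ring
  have hL' : k - l + (-1 + w) = k - l + w - 1 := by ring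
  calc rhoE q a b c k (rhoF q a b c l (consTensor R (botIdx (c 0) a b) x))
      = consTensor R (botIdx (c 0) a b)
          (qpow q (-l) • rhoE q a b (Fin.tail c) k (rhoF q a b (Fin.tail c) l x)) +
        ((raiseCoeff q (c 0) : R) * qpow q (l + 1 - w - k)) • consTensor R (topIdx (c 0) a b)
          (rhoE q a b (Fin.tail c) (k - 1) (rhoF q a b (Fin.tail c) l x)) := by
        rw [rhoF_consTensor_botIdx q hab, map_smul, map_smul, hEF, smul_add, smul_smul,
          mul_left_comm, ← qpow_add]
        ring_nf
    _ = _ := by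
        rw [h.smul_eq_sum q hkN, h N (k - 1) l (by omega), hL, hL']
        simp only [hFE, map_sum, map_add, map_smul, smul_add, Finset.sum_add_distrib,
          Finset.smul_sum, sub_right_comm k,
          smul_comm ((raiseCoeff q (c 0) : R) * qpow q (l + 1 - w - k))]

theorem CommutesOn.consTensor_of_ne (hab : a ≠ b) {j : Fin n}
    (htop : j ≠ topIdx (c 0) a b) (hbot : j ≠ botIdx (c 0) a b)
    (h : CommutesOn q a b (Fin.tail c) w x) :
    CommutesOn q a b c w (consTensor R j x) := by
  intro N k l hkN
  have hE (k : ℤ) (y : Mx R n m) : rhoE q a b c k (consTensor R j y) =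
      consTensor R j (rhoE q a b (Fin.tail c) k y) := by
    simp [rhoE_consTensor q hab, hbot]
  have hF (l : ℤ) (y : Mx R n m) : rhoF q a b c l (consTensor R j y) =
      consTensor R j (rhoF q a b (Fin.tail c) l y) := by
    simp [rhoF_consTensor, htop, coroot_eq_zero htop hbot, qpow_zero]
  simp only [hE, hF, h N k l hkN, map_sum, map_smul]

theorem commutesOn_single (hab : a ≠ b) (c : Fin m → Bool) (J : Fin m → Fin n) :
    CommutesOn q a b c (weight c J (coroot a b)) (Finsupp.single J (1 : R)) := by
  induction m with
  | zero => simpa [weight_apply] using commutesOn_fin_zero q c (Finsupp.single J 1)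
  | succ m ih =>
    obtain ⟨j, J, rfl⟩ : ∃ j J', J = (Fin.cons j J' : Fin (m + 1) → Fin n) :=
      ⟨J 0, Fin.tail J, (Fin.cons_self_tail J).symm⟩
    have hx : opH R q n m (Fin.tail c) (-coroot a b) (Finsupp.single J 1) =
        qpow q (-weight (Fin.tail c) J (coroot a b)) • Finsupp.single J 1 := by
      rw [opH_single, map_neg]
    have htail := ih (Fin.tail c) J
    rw [← consTensor_single, weight_cons]
    by_cases htop : j = topIdx (c 0) a b
    · rw [htop, factorSign_mul_coroot_topIdx hab]
      exact htail.consTensor_topIdx q hab hx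
    by_cases hbot : j = botIdx (c 0) a b
    · rw [hbot, factorSign_mul_coroot_botIdx hab]
      exact htail.consTensor_botIdx q hab hx
    rw [coroot_eq_zero htop hbot, mul_zero, zero_add]
    exact htail.consTensor_of_ne q hab htop hbot

end Commutation

section Generation

variable {R : Type*} [CommRing R] (q : Rˣ) {n m : ℕ} {a b : Fin n}

theorem rhoE_mul_rhoF (hab : a ≠ b) (c : Fin m → Bool) (s : ℕ) :
    rhoE q a b c s * rhoF q a b c s =
      ∑ t ∈ Finset.range s, rhoF q a b c (s - t) * rhoE q a b c (s - t) *
          diag (fun J => qBinom q (weight c J (coroot a b)) t) +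
        diag fun J => qBinom q (weight c J (coroot a b)) s := by
  refine linearMap_ext_single fun J => ?_
  have hcomm := commutesOn_single q hab c J (s + 1) s s (by omega)
  rw [Finset.sum_range_succ, sub_self, rhoE_zero q hab, rhoF_zero, zero_add] at hcomm
  simp only [LinearMap.add_apply, LinearMap.sum_apply, Module.End.mul_apply, hcomm, diag_single,
    map_smul, LinearMap.id_apply]

variable {A : Subalgebra R (Module.End R (Mx R n m))} {c : Fin m → Bool}

theorem diag_qBinom_weight_mem (hab : a ≠ b) (hE : ∀ l, opE R q n a b m c 0 (l + 1) ∈ A)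
    (hF : ∀ l, opF R q n a b m c 0 (l + 1) ∈ A) (s : ℕ) :
    diag (fun J => qBinom q (weight c J (coroot a b)) s) ∈ A := by
  have hrhoE : ∀ k : ℕ, rhoE q a b c k ∈ A
    | 0 => by rw [Nat.cast_zero, rhoE_zero q hab]; exact A.one_mem
    | k + 1 => hE k
  have hrhoF : ∀ k : ℕ, rhoF q a b c k ∈ A
    | 0 => by rw [Nat.cast_zero, rhoF_zero]; exact A.one_mem
    | k + 1 => hF k
  induction s using Nat.strong_induction_on with
  | _ s ih =>
    have hdiag : diag (fun J => qBinom q (weight c J (coroot a b)) s) =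
        rhoE q a b c s * rhoF q a b c s + (-1 : R) •
          ∑ t ∈ Finset.range s, rhoF q a b c (s - t) * rhoE q a b c (s - t) *
            diag fun J => qBinom q (weight c J (coroot a b)) t := by
      rw [rhoE_mul_rhoF q hab]
      module
    rw [hdiag]
    refine A.add_mem (A.mul_mem (hrhoE s) (hrhoF s)) (A.smul_mem (A.sum_mem fun t ht => ?_) _)
    have hts := Finset.mem_range.1 ht
    rw [← Nat.cast_sub hts.le]
    exact A.mul_mem (A.mul_mem (hrhoF _) (hrhoE _)) (ih t hts)

theorem diag_comp_weight_coroot_mem (hab : a ≠ b)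
    (hK : opH R q n m c (-coroot a b) ∈ A)
    (hE : ∀ l, opE R q n a b m c 0 (l + 1) ∈ A)
    (hF : ∀ l, opF R q n a b m c 0 (l + 1) ∈ A) (g : ℤ → R) :
    diag (g ∘ fun J => weight c J (coroot a b)) ∈ A := by
  refine comp_mem_of_qBinom_comp_mem (A.comap diag) q _ ?_
    (diag_qBinom_weight_mem q hab hE hF) g
  simpa only [Subalgebra.mem_comap, opH_eq_diag, map_neg] using hK

theorem opH_mem
    (hK : ∀ (i : Fin n) (hi : (i : ℕ) + 1 < n), opH R q n m c (-coroot i ⟨i + 1, hi⟩) ∈ A)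
    (hE : ∀ (i : Fin n) (hi : (i : ℕ) + 1 < n) (l : ℕ),
      opE R q n i ⟨i + 1, hi⟩ m c 0 (l + 1) ∈ A)
    (hF : ∀ (i : Fin n) (hi : (i : ℕ) + 1 < n) (l : ℕ),
      opF R q n i ⟨i + 1, hi⟩ m c 0 (l + 1) ∈ A)
    (h : Fin n → ℤ) : opH R q n m c h ∈ A := by
  rw [opH_eq_diag]
  refine mem_of_factorsThrough_pi (A.comap diag)
    (fun (i : {i : Fin n // (i : ℕ) + 1 < n}) J => weight c J (coroot i.1 ⟨i.1 + 1, i.2⟩))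
    (fun ⟨i, hi⟩ g => diag_comp_weight_coroot_mem q (Fin.ne_of_val_ne (Nat.succ_ne_self i).symm)
      (hK i hi) (hE i hi) (hF i hi) g) fun J J' hJ => ?_
  rw [weight_eq_of_coroot fun i hi => congrFun hJ ⟨i, hi⟩]

end Generation

theorem stmt2_general (R : Type*) [CommRing R] (q : Rˣ) (n m : ℕ) (c : Fin m → Bool) :
    Algebra.adjoin R (qgGens R q n m c) = Algebra.adjoin R (qgGensK R q n m c) := by
  refine le_antisymm (Algebra.adjoin_le ?_) (Algebra.adjoin_le ?_)
  · rintro _ (⟨h, rfl⟩ | hg)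
    · refine opH_mem q (fun i hi => Algebra.subset_adjoin (.inl ⟨i, hi, -1, .inr rfl, ?_⟩))
        (fun i hi l => Algebra.subset_adjoin (.inr (.inl ⟨i, hi, l + 1, l.succ_pos, rfl⟩)))
        (fun i hi l => Algebra.subset_adjoin (.inr (.inr ⟨i, hi, l + 1, l.succ_pos, rfl⟩))) h
      exact congrArg _ (funext fun j => (neg_one_mul _).symm)
    · exact Algebra.subset_adjoin (.inr hg)
  · rintro _ (⟨i, hi, ε, -, rfl⟩ | hg)
    · exact Algebra.subset_adjoin (.inl ⟨_, rfl⟩)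
    · exact Algebra.subset_adjoin (.inr hg)

/-- on ordinary tensor space `V^{⊗m}`, the `R`-subalgebra of
`End_R(V^{⊗m})` generated by the operators `ρ(e_i^{(l)})`, `ρ(f_i^{(l)})`
together with all `ρ(q^h)` (`h ∈ P∨`) coincides with the `R`-subalgebra
generated by the `ρ(e_i^{(l)})`, `ρ(f_i^{(l)})` together with the
`ρ(K_i^{±1})` only. -/
theorem stmt2 (R : Type*) [CommRing R] (q : Rˣ) (n m : ℕ) :
    Algebra.adjoin R (qgGens R q n m (fun _ => true)) =
      Algebra.adjoin R (qgGensK R q n m (fun _ => true)) :=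
  stmt2_general R q n m fun _ => true
end

section
/- Let m ≥ 1 and let φ ∈ End_R(V^{⊗m}) have matrix coefficients γ(i,j) ∈ R (i,j ∈ I(n,m) := {1,…,n}^m) defined by φ(v_j) = Σ_i γ(i,j)v_i. Then φ commutes with all the operators S_t (1 ≤ t ≤ m−1) if and only if for every t and all i,j ∈ I(n,m), writing a = i_t, b = i_{t+1}, c = j_t, d = j_{t+1} and letting i·s_t, j·s_t denote i, j with the entries in positions t, t+1 swapped, the following hold: γ(i,j) = q·γ(i·s_t, j) whenever a < b and c = d; γ(i,j) = q·γ(i, j·s_t) whenever a = b and c < d; γ(i,j) = γ(i·s_t, j·s_t) whenever a < b and c > d; γ(i,j) = γ(i·s_t, j·s_t) + (q−q^{−1})·γ(i, j·s_t) whenever a < b and c < d. -/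
open scoped BigOperators

/-- Tensor space `V^{⊗m}` for `V = R^n`, with basis indexed by multi-indices. -/
abbrev TSp (R : Type*) [CommRing R] (n m : ℕ) := ((Fin m → Fin n) →₀ R)

/-- The Hecke operator `S_t` (`t = p+1`, acting on tensor positions `p`, `p+1`,
0-based) on tensor space. -/
noncomputable def heckeX (R : Type*) [CommRing R] (q : Rˣ) (n m : ℕ) (p : ℕ) (hp : p + 1 < m) :
    TSp R n m →ₗ[R] TSp R n m :=
  Finsupp.linearCombination R fun j : Fin m → Fin n =>
    if j ⟨p, by omega⟩ = j ⟨p + 1, hp⟩ then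
      ((q⁻¹ : Rˣ) : R) • Finsupp.single j 1
    else if j ⟨p, by omega⟩ < j ⟨p + 1, hp⟩ then
      Finsupp.single (swapIdx j p hp) 1
    else
      Finsupp.single (swapIdx j p hp) 1 + (((q⁻¹ : Rˣ) : R) - (q : R)) • Finsupp.single j 1

/-!
Comparing coefficients of `v_i` in `φ (v_j S_t)` and `φ (v_j) S_t` turns commutation into one
equation per pair `(i, j)`, provided the action of `S_t` on coefficients has the same shape as its
action on basis vectors, i.e. provided the matrix of `S_t` is symmetric. The equations for the four
pairs in `{i, i·s_t} × {j, j·s_t}` involve only the entries of `γ` at these pairs; choosing `i` and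
`j` weakly increasing at `t`, they collapse to the stated relations. Symmetry of `S_t` is itself
the instance of this equivalence in which `γ` is the Kronecker delta.
-/

section SwapIdx

variable {n m p : ℕ} (hp : p + 1 < m)

theorem swapIdx_eq_comp_swap (j : Fin m → Fin n) :
    swapIdx j p hp = j ∘ Equiv.swap ⟨p + 1, hp⟩ ⟨p, by omega⟩ :=
  (Equiv.comp_swap_eq_update _ _ j).symm

@[simp]
theorem swapIdx_apply_left (j : Fin m → Fin n) :
    swapIdx j p hp ⟨p, by omega⟩ = j ⟨p + 1, hp⟩ := by
  simp [swapIdx_eq_comp_swap]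

@[simp]
theorem swapIdx_apply_right (j : Fin m → Fin n) :
    swapIdx j p hp ⟨p + 1, hp⟩ = j ⟨p, by omega⟩ := by
  simp [swapIdx_eq_comp_swap]

@[simp]
theorem swapIdx_swapIdx (j : Fin m → Fin n) : swapIdx (swapIdx j p hp) p hp = j := by
  ext k
  simp [swapIdx_eq_comp_swap]

theorem swapIdx_inj {i j : Fin m → Fin n} : swapIdx i p hp = swapIdx j p hp ↔ i = j := by
  rw [swapIdx_eq_comp_swap, swapIdx_eq_comp_swap]
  exact (Equiv.surjective _).injective_comp_right.eq_iff

theorem swapIdx_cases {P : (Fin m → Fin n) → Prop}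
    (eq : ∀ j, j ⟨p, by omega⟩ = j ⟨p + 1, hp⟩ → P j)
    (lt : ∀ j, j ⟨p, by omega⟩ < j ⟨p + 1, hp⟩ → P j)
    (swap_lt : ∀ j, j ⟨p, by omega⟩ < j ⟨p + 1, hp⟩ → P (swapIdx j p hp))
    (j : Fin m → Fin n) : P j := by
  rcases lt_trichotomy (j ⟨p, by omega⟩) (j ⟨p + 1, hp⟩) with h | h | h
  · exact lt j h
  · exact eq j h
  · simpa using swap_lt (swapIdx j p hp) (by simpa using h)

end SwapIdx

section HeckeOp

variable {R M N : Type*} [CommRing R] [AddCommGroup M] [Module R M] [AddCommGroup N] [Module R N]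
variable (q : Rˣ) {n m p : ℕ} (hp : p + 1 < m)

/-- The Hecke operator `S_t` (`t = p + 1`) acting on families of elements of an `R`-module indexed
by multi-indices. The family of basis vectors gives `v_j S_t`; rows and columns of a matrix give
the entries of its products with `S_t`. -/
def heckeOp : ((Fin m → Fin n) → M) →ₗ[R] ((Fin m → Fin n) → M) where
  toFun f j :=
    if j ⟨p, by omega⟩ = j ⟨p + 1, hp⟩ then ((q⁻¹ : Rˣ) : R) • f j
    else if j ⟨p, by omega⟩ < j ⟨p + 1, hp⟩ then f (swapIdx j p hp)
    else f (swapIdx j p hp) + (((q⁻¹ : Rˣ) : R) - (q : R)) • f j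
  map_add' f g := by
    ext j
    simp only [Pi.add_apply]
    split_ifs <;> module
  map_smul' c f := by
    ext j
    simp only [Pi.smul_apply, RingHom.id_apply]
    split_ifs <;> module

theorem heckeOp_apply_of_eq (f : (Fin m → Fin n) → M) {j : Fin m → Fin n}
    (hj : j ⟨p, by omega⟩ = j ⟨p + 1, hp⟩) :
    heckeOp q hp f j = ((q⁻¹ : Rˣ) : R) • f j :=
  if_pos hj

theorem heckeOp_apply_of_lt (f : (Fin m → Fin n) → M) {j : Fin m → Fin n}
    (hj : j ⟨p, by omega⟩ < j ⟨p + 1, hp⟩) :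
    heckeOp q hp f j = f (swapIdx j p hp) :=
  (if_neg hj.ne).trans (if_pos hj)

theorem heckeOp_apply_swapIdx_of_lt (f : (Fin m → Fin n) → M) {j : Fin m → Fin n}
    (hj : j ⟨p, by omega⟩ < j ⟨p + 1, hp⟩) :
    heckeOp q hp f (swapIdx j p hp) =
      f j + (((q⁻¹ : Rˣ) : R) - (q : R)) • f (swapIdx j p hp) := by
  simp [heckeOp, hj.ne', hj.not_gt]

theorem map_heckeOp_apply (g : M →ₗ[R] N) (f : (Fin m → Fin n) → M) (j : Fin m → Fin n) :
    g (heckeOp q hp f j) = heckeOp q hp (fun k => g (f k)) j := by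
  simp only [heckeOp, LinearMap.coe_mk, AddHom.coe_mk, apply_ite g, map_add, map_smul]

theorem heckeX_single_one (j : Fin m → Fin n) :
    heckeX R q n m p hp (Finsupp.single j 1) = heckeOp q hp (fun k => Finsupp.single k (1 : R)) j :=
  (Finsupp.linearCombination_single ..).trans (one_smul ..)

end HeckeOp

section HeckeRelations

variable {R : Type*} [CommRing R] (q : Rˣ) {n m p : ℕ} (hp : p + 1 < m)

/-- The relations between the entries of a matrix `γ` that express, as `heckeOp_row_eq_col_iff`
shows, that `γ` commutes with `S_t` (`t = p + 1`). -/
structure HeckeRelations (γ : (Fin m → Fin n) → (Fin m → Fin n) → R) : Prop where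
  lt_eq : ∀ i j, i ⟨p, by omega⟩ < i ⟨p + 1, hp⟩ → j ⟨p, by omega⟩ = j ⟨p + 1, hp⟩ →
    γ i j = (q : R) * γ (swapIdx i p hp) j
  eq_lt : ∀ i j, i ⟨p, by omega⟩ = i ⟨p + 1, hp⟩ → j ⟨p, by omega⟩ < j ⟨p + 1, hp⟩ →
    γ i j = (q : R) * γ i (swapIdx j p hp)
  lt_gt : ∀ i j, i ⟨p, by omega⟩ < i ⟨p + 1, hp⟩ → j ⟨p + 1, hp⟩ < j ⟨p, by omega⟩ →
    γ i j = γ (swapIdx i p hp) (swapIdx j p hp)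
  lt_lt : ∀ i j, i ⟨p, by omega⟩ < i ⟨p + 1, hp⟩ → j ⟨p, by omega⟩ < j ⟨p + 1, hp⟩ →
    γ i j = γ (swapIdx i p hp) (swapIdx j p hp) +
      ((q : R) - ((q⁻¹ : Rˣ) : R)) * γ i (swapIdx j p hp)

variable {q hp} {γ : (Fin m → Fin n) → (Fin m → Fin n) → R}

theorem HeckeRelations.of_heckeOp_row_eq_col
    (h : ∀ i j, heckeOp q hp (γ i) j = heckeOp q hp (fun k => γ k j) i) :
    HeckeRelations q hp γ where
  lt_eq i j hi hj := by
    have hij := h i j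
    rwa [heckeOp_apply_of_eq q hp _ hj, heckeOp_apply_of_lt q hp _ hi, smul_eq_mul,
      Units.inv_mul_eq_iff_eq_mul] at hij
  eq_lt i j hi hj := by
    have hij := h i j
    rwa [heckeOp_apply_of_lt q hp _ hj, heckeOp_apply_of_eq q hp _ hi, smul_eq_mul,
      eq_comm, Units.inv_mul_eq_iff_eq_mul] at hij
  lt_gt i j hi hj := by
    have hij := h i (swapIdx j p hp)
    rwa [heckeOp_apply_of_lt q hp _ (by simpa using hj), heckeOp_apply_of_lt q hp _ hi,
      swapIdx_swapIdx] at hij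
  lt_lt i j hi hj := by
    have hij := h i (swapIdx j p hp)
    rw [heckeOp_apply_swapIdx_of_lt q hp _ hj, heckeOp_apply_of_lt q hp _ hi, smul_eq_mul] at hij
    linear_combination hij

theorem HeckeRelations.apply_swapIdx_right (h : HeckeRelations q hp γ) {i j : Fin m → Fin n}
    (hi : i ⟨p, by omega⟩ < i ⟨p + 1, hp⟩) (hj : j ⟨p, by omega⟩ < j ⟨p + 1, hp⟩) :
    γ i (swapIdx j p hp) = γ (swapIdx i p hp) j := by
  simpa using h.lt_gt i (swapIdx j p hp) hi (by simpa using hj)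

theorem HeckeRelations.heckeOp_row_eq_col (h : HeckeRelations q hp γ) (i j : Fin m → Fin n) :
    heckeOp q hp (γ i) j = heckeOp q hp (fun k => γ k j) i := by
  induction i using swapIdx_cases hp with
  | eq i hi =>
    induction j using swapIdx_cases hp with
    | eq j hj => rw [heckeOp_apply_of_eq q hp _ hj, heckeOp_apply_of_eq q hp _ hi]
    | lt j hj =>
      rw [heckeOp_apply_of_lt q hp _ hj, heckeOp_apply_of_eq q hp _ hi, h.eq_lt i j hi hj,
        smul_eq_mul, Units.inv_mul_cancel_left]
    | swap_lt j hj =>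
      rw [heckeOp_apply_swapIdx_of_lt q hp _ hj, heckeOp_apply_of_eq q hp _ hi, h.eq_lt i j hi hj]
      simp only [smul_eq_mul]
      ring
  | lt i hi =>
    induction j using swapIdx_cases hp with
    | eq j hj =>
      rw [heckeOp_apply_of_eq q hp _ hj, heckeOp_apply_of_lt q hp _ hi, h.lt_eq i j hi hj,
        smul_eq_mul, Units.inv_mul_cancel_left]
    | lt j hj =>
      rw [heckeOp_apply_of_lt q hp _ hj, heckeOp_apply_of_lt q hp _ hi,
        h.apply_swapIdx_right hi hj]
    | swap_lt j hj =>
      rw [heckeOp_apply_swapIdx_of_lt q hp _ hj, heckeOp_apply_of_lt q hp _ hi, h.lt_lt i j hi hj]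
      simp only [smul_eq_mul]
      ring
  | swap_lt i hi =>
    induction j using swapIdx_cases hp with
    | eq j hj =>
      rw [heckeOp_apply_of_eq q hp _ hj, heckeOp_apply_swapIdx_of_lt q hp _ hi, h.lt_eq i j hi hj]
      simp only [smul_eq_mul]
      ring
    | lt j hj =>
      rw [heckeOp_apply_of_lt q hp _ hj, heckeOp_apply_swapIdx_of_lt q hp _ hi, h.lt_lt i j hi hj,
        h.apply_swapIdx_right hi hj]
      simp only [smul_eq_mul]
      ring
    | swap_lt j hj =>
      rw [heckeOp_apply_swapIdx_of_lt q hp _ hj, heckeOp_apply_swapIdx_of_lt q hp _ hi,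
        h.apply_swapIdx_right hi hj]

theorem heckeOp_row_eq_col_iff :
    (∀ i j, heckeOp q hp (γ i) j = heckeOp q hp (fun k => γ k j) i) ↔ HeckeRelations q hp γ :=
  ⟨.of_heckeOp_row_eq_col, HeckeRelations.heckeOp_row_eq_col⟩

variable (q hp)

theorem heckeRelations_single_one :
    HeckeRelations q hp fun i j : Fin m → Fin n => Finsupp.single j (1 : R) i where
  lt_eq i j hi hj := by
    have hij : j ≠ i := by rintro rfl; exact hi.ne hj
    have hij' : j ≠ swapIdx i p hp := by rintro rfl; simp [hi.ne'] at hj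
    simp [hij, hij']
  eq_lt i j hi hj := by
    have hij : j ≠ i := by rintro rfl; exact hj.ne hi
    have hij' : swapIdx j p hp ≠ i := by rintro rfl; simp [hj.ne'] at hi
    simp [hij, hij']
  lt_gt i j _ _ := by simp [Finsupp.single_apply, swapIdx_inj]
  lt_lt i j hi hj := by
    have hij : swapIdx j p hp ≠ i := by rintro rfl; simp [hj.not_gt] at hi
    simp [Finsupp.single_apply, swapIdx_inj, hij]

end HeckeRelations

section Commutation

variable {R : Type*} [CommRing R] (q : Rˣ) {n m p : ℕ} (hp : p + 1 < m)

theorem heckeX_apply (x : TSp R n m) (i : Fin m → Fin n) :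
    heckeX R q n m p hp x i = heckeOp q hp x i := by
  suffices Finsupp.lapply i ∘ₗ heckeX R q n m p hp =
      LinearMap.proj i ∘ₗ heckeOp q hp ∘ₗ Finsupp.lcoeFun from LinearMap.congr_fun this x
  refine Finsupp.lhom_ext' fun j => LinearMap.ext_ring ?_
  calc heckeX R q n m p hp (Finsupp.single j 1) i
      = Finsupp.lapply (R := R) i (heckeOp q hp (fun k => Finsupp.single k (1 : R)) j) := by
        rw [heckeX_single_one, Finsupp.lapply_apply]
    _ = heckeOp q hp (fun k => Finsupp.single k (1 : R) i) j := map_heckeOp_apply q hp _ _ j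
    _ = heckeOp q hp (Finsupp.single j (1 : R)) i :=
        (heckeRelations_single_one q hp).heckeOp_row_eq_col i j

theorem comp_heckeX_eq_heckeX_comp_iff (φ : TSp R n m →ₗ[R] TSp R n m) :
    φ ∘ₗ heckeX R q n m p hp = heckeX R q n m p hp ∘ₗ φ ↔
      HeckeRelations q hp fun i j => φ (Finsupp.single j 1) i := by
  have comp_entry (i j : Fin m → Fin n) : φ (heckeX R q n m p hp (Finsupp.single j 1)) i =
      heckeOp q hp (fun k => φ (Finsupp.single k 1) i) j := by
    rw [heckeX_single_one]
    exact map_heckeOp_apply q hp (Finsupp.lapply i ∘ₗ φ) _ j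
  rw [← heckeOp_row_eq_col_iff]
  constructor
  · intro h i j
    rw [← comp_entry, ← heckeX_apply]
    exact DFunLike.congr_fun (LinearMap.congr_fun h (Finsupp.single j 1)) i
  · refine fun h => Finsupp.lhom_ext' fun j => LinearMap.ext_ring (Finsupp.ext fun i => ?_)
    exact (comp_entry i j).trans ((h i j).trans (heckeX_apply q hp _ i).symm)

end Commutation

/-- an endomorphism `φ` of `V^{⊗m}` with matrix coefficients `γ`
commutes with all the operators `S_t` iff the explicit relations among the
`γ(i,j)` hold. -/
theorem stmt5 (R : Type*) [CommRing R] (q : Rˣ) (n m : ℕ) (hm : 1 ≤ m)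
    (φ : TSp R n m →ₗ[R] TSp R n m)
    (γ : (Fin m → Fin n) → (Fin m → Fin n) → R)
    (hγ : ∀ i j, γ i j = φ (Finsupp.single j 1) i) :
    (∀ (p : ℕ) (hp : p + 1 < m), φ ∘ₗ heckeX R q n m p hp = heckeX R q n m p hp ∘ₗ φ) ↔
    (∀ (p : ℕ) (hp : p + 1 < m) (i j : Fin m → Fin n),
      (i ⟨p, by omega⟩ < i ⟨p + 1, hp⟩ → j ⟨p, by omega⟩ = j ⟨p + 1, hp⟩ →
        γ i j = (q : R) * γ (swapIdx i p hp) j) ∧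
      (i ⟨p, by omega⟩ = i ⟨p + 1, hp⟩ → j ⟨p, by omega⟩ < j ⟨p + 1, hp⟩ →
        γ i j = (q : R) * γ i (swapIdx j p hp)) ∧
      (i ⟨p, by omega⟩ < i ⟨p + 1, hp⟩ → j ⟨p + 1, hp⟩ < j ⟨p, by omega⟩ →
        γ i j = γ (swapIdx i p hp) (swapIdx j p hp)) ∧
      (i ⟨p, by omega⟩ < i ⟨p + 1, hp⟩ → j ⟨p, by omega⟩ < j ⟨p + 1, hp⟩ →
        γ i j = γ (swapIdx i p hp) (swapIdx j p hp) +
          ((q : R) - ((q⁻¹ : Rˣ) : R)) * γ i (swapIdx j p hp))) := by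
  obtain rfl : γ = fun i j => φ (Finsupp.single j 1) i := funext₂ hγ
  refine forall₂_congr fun p hp => (comp_heckeX_eq_heckeX_comp_iff q hp φ).trans ?_
  constructor
  · exact fun h i j => ⟨h.lt_eq i j, h.eq_lt i j, h.lt_gt i j, h.lt_lt i j⟩
  · exact fun h => ⟨fun i j => (h i j).1, fun i j => (h i j).2.1, fun i j => (h i j).2.2.1,
      fun i j => (h i j).2.2.2⟩
end

section
/- In A_q(n,n) the following hold for all 1 ≤ i,j ≤ n: (i) the left quantum minor (i,1,2,…,ĵ,…,n | 1,2,…,n)_l, whose row sequence starts with i followed by {1,…,n}∖{j} in increasing order, equals δ_{ij}·(−q)^{j−1}·det_q; (ii) the right quantum minor (1,2,…,n | i,1,2,…,ĵ,…,n)_r, whose column sequence starts with i followed by {1,…,n}∖{j} in increasing order, equals δ_{ij}·(−q)^{2i−j−1}·det_q. -/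
open scoped BigOperators

/-- Number of inversions of a permutation of `Fin k` (its Coxeter length). -/
def invCount {k : ℕ} (w : Equiv.Perm (Fin k)) : ℕ :=
  ((Finset.univ : Finset (Fin k × Fin k)).filter
    (fun p => p.1 < p.2 ∧ w p.2 < w p.1)).card

/-- Ordered product of a tuple of elements in a (possibly noncommutative) monoid. -/
def oprod {A : Type*} [Monoid A] {k : ℕ} (g : Fin k → A) : A :=
  (List.ofFn g).prod

/-- The increasing enumeration of `{1,…,n} \ {i}` (0-based). -/
def omitIdx {n : ℕ} (i : Fin n) (t : Fin (n - 1)) : Fin n :=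
  if (t : ℕ) < (i : ℕ) then ⟨t, by have := t.2; omega⟩ else ⟨(t : ℕ) + 1, by have := t.2; omega⟩

/-- The sequence `i, f 0, f 1, …` of length `n` (prepending an entry to a
sequence of length `n-1`). -/
def consSeq {n : ℕ} (i : Fin n) (f : Fin (n - 1) → Fin n) : Fin n → Fin n :=
  fun t => if h : (t : ℕ) = 0 then i else f ⟨(t : ℕ) - 1, by have := t.2; omega⟩

/-- The defining relations of the quantum matrix bialgebra `A_q(n)`. -/
inductive QMRel (R : Type*) [CommRing R] (q : Rˣ) (n : ℕ) :
    FreeAlgebra R (Fin n × Fin n) → FreeAlgebra R (Fin n × Fin n) → Prop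
  | col {i j k : Fin n} (h : i < j) :
      QMRel R q n (FreeAlgebra.ι R (i, k) * FreeAlgebra.ι R (j, k))
        ((q : R) • (FreeAlgebra.ι R (j, k) * FreeAlgebra.ι R (i, k)))
  | row {k i j : Fin n} (h : i < j) :
      QMRel R q n (FreeAlgebra.ι R (k, i) * FreeAlgebra.ι R (k, j))
        ((q : R) • (FreeAlgebra.ι R (k, j) * FreeAlgebra.ι R (k, i)))
  | comm {i j k l : Fin n} (h1 : i < k) (h2 : l < j) :
      QMRel R q n (FreeAlgebra.ι R (i, j) * FreeAlgebra.ι R (k, l))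
        (FreeAlgebra.ι R (k, l) * FreeAlgebra.ι R (i, j))
  | qcomm {i j k l : Fin n} (h1 : i < k) (h2 : j < l) :
      QMRel R q n (FreeAlgebra.ι R (i, j) * FreeAlgebra.ι R (k, l))
        (FreeAlgebra.ι R (k, l) * FreeAlgebra.ι R (i, j) +
          ((q : R) - ((q⁻¹ : Rˣ) : R)) • (FreeAlgebra.ι R (i, l) * FreeAlgebra.ι R (k, j)))

/-- The quantum matrix bialgebra `A_q(n)`. -/
abbrev AqAlg (R : Type*) [CommRing R] (q : Rˣ) (n : ℕ) := RingQuot (QMRel R q n)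

/-- The generator `x_{ij}` of `A_q(n)`. -/
def xq (R : Type*) [CommRing R] (q : Rˣ) (n : ℕ) (i j : Fin n) : AqAlg R q n :=
  RingQuot.mkAlgHom R (QMRel R q n) (FreeAlgebra.ι R (i, j))

/-- The right quantum minor `(i_1 … i_k | j_1 … j_k)_r` for an increasing row
sequence and an arbitrary column sequence. -/
noncomputable def qMinorR (R : Type*) [CommRing R] (q : Rˣ) (n : ℕ) {k : ℕ}
    (rows cols : Fin k → Fin n) : AqAlg R q n :=
  ∑ w : Equiv.Perm (Fin k),
    (((-q) ^ invCount w : Rˣ) : R) • oprod (fun t => xq R q n (rows (w t)) (cols t))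

/-- The left quantum minor `(i_1 … i_k | j_1 … j_k)_l` for an arbitrary row
sequence and an increasing column sequence. -/
noncomputable def qMinorL (R : Type*) [CommRing R] (q : Rˣ) (n : ℕ) {k : ℕ}
    (rows cols : Fin k → Fin n) : AqAlg R q n :=
  ∑ w : Equiv.Perm (Fin k),
    (((-q) ^ invCount w : Rˣ) : R) • oprod (fun t => xq R q n (rows t) (cols (w t)))

/-- The quantum determinant. -/
noncomputable def detq (R : Type*) [CommRing R] (q : Rˣ) (n : ℕ) : AqAlg R q n :=
  qMinorR R q n (fun t => t) (fun t => t)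

/-!
Both kinds of minors are values of one quantum determinant `qDet q` on matrices over an arbitrary
algebra: left minors of submatrices of `X = (x_{ij})`, right minors of their transposes. All that is
used about `X` and `Xᵀ` is that they are Manin matrices, for which `qDet q` behaves like an
alternating function of *adjacent* rows: it vanishes when they are equal, and exchanging two rows
that are out of order produces a factor `-q`. Hence a row `i` placed in front of an increasing
sequence may be moved to the right past all smaller rows. If the sequence contains `i`, it ends up
next to its twin and the minor is zero; otherwise it completes the identity sequence. Finally
`det_q` can be expanded along rows or along columns, because `x_{ij}` and `x_{kl}` commute for
`i < k`, `j > l`.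
-/

section OrderedProduct

variable {B : Type*} [Monoid B]

theorem oprod_eq_prod_take_mul_mul_prod_drop {m : ℕ} (g : Fin (m + 1) → B) (s : Fin m) :
    oprod g = ((List.ofFn g).take s).prod * (g s.castSucc * g s.succ) *
      ((List.ofFn g).drop (s + 2)).prod := by
  have hs : (s : ℕ) + 1 < (List.ofFn g).length := by simp
  rw [oprod, ← List.prod_take_mul_prod_drop _ s, List.drop_eq_getElem_cons (by omega),
    List.drop_eq_getElem_cons hs]
  simp only [List.getElem_ofFn, List.prod_cons, mul_assoc]
  rfl

theorem exists_oprod_eq_mul_mul_mul {m : ℕ} (g : Fin (m + 1) → B) (s : Fin m) :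
    ∃ P Q : B, ∀ h : Fin (m + 1) → B, (∀ u, u ≠ s.castSucc → u ≠ s.succ → h u = g u) →
      oprod h = P * (h s.castSucc * h s.succ) * Q := by
  refine ⟨((List.ofFn g).take s).prod, ((List.ofFn g).drop (s + 2)).prod, fun h hg => ?_⟩
  have htake : (List.ofFn h).take s = (List.ofFn g).take s := by
    refine List.ext_getElem (by simp) fun u hu _ => ?_
    simp only [List.length_take, List.length_ofFn, lt_min_iff] at hu
    simp only [List.getElem_take, List.getElem_ofFn]
    exact hg _ (Fin.ne_of_val_ne (show u ≠ (s : ℕ) by omega))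
      (Fin.ne_of_val_ne (show u ≠ (s : ℕ) + 1 by omega))
  have hdrop : (List.ofFn h).drop (s + 2) = (List.ofFn g).drop (s + 2) := by
    refine List.ext_getElem (by simp) fun u _ _ => ?_
    simp only [List.getElem_drop, List.getElem_ofFn]
    exact hg _ (Fin.ne_of_val_ne (show (s : ℕ) + 2 + u ≠ (s : ℕ) by omega))
      (Fin.ne_of_val_ne (show (s : ℕ) + 2 + u ≠ (s : ℕ) + 1 by omega))
  rw [oprod_eq_prod_take_mul_mul_prod_drop h s, htake, hdrop]

variable {α : Type*} (r : α → α → Prop) [DecidableRel r] (g : α → B)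

theorem prod_map_orderedInsert_of_commute (a : α) (l : List α)
    (h : ∀ b ∈ l, r a b ∨ Commute (g a) (g b)) :
    ((l.orderedInsert r a).map g).prod = g a * (l.map g).prod := by
  induction l with
  | nil => simp
  | cons b l ih =>
    rw [List.forall_mem_cons] at h
    rw [List.orderedInsert_cons]
    split_ifs with hab
    · simp
    · have hcomm : Commute (g a) (g b) := h.1.resolve_left hab
      simp only [List.map_cons, List.prod_cons, ih h.2, hcomm.left_comm]

theorem prod_map_insertionSort_of_commute (l : List α)
    (h : l.Pairwise fun a b => r a b ∨ Commute (g a) (g b)) :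
    ((l.insertionSort r).map g).prod = (l.map g).prod := by
  induction l with
  | nil => simp
  | cons a l ih =>
    rw [List.pairwise_cons] at h
    rw [List.insertionSort_cons, prod_map_orderedInsert_of_commute, ih h.2, List.map_cons,
      List.prod_cons]
    simpa using h.1

end OrderedProduct

section PermutationsAndSequences

open Equiv

theorem insertionSort_ofFn_perm {k : ℕ} (w : Perm (Fin k)) :
    (List.ofFn w).insertionSort (· ≤ ·) = List.finRange k := by
  refine List.Perm.eq_of_pairwise' (r := (· ≤ ·)) (List.pairwise_insertionSort _ _)
    ((List.pairwise_lt_finRange k).imp le_of_lt) ((List.perm_insertionSort _ _).trans ?_)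
  simpa [List.ofFn_eq_map] using w.map_finRange_perm

theorem oprod_perm_eq_oprod_inv_perm {B : Type*} [Monoid B] {k : ℕ}
    (M : Matrix (Fin k) (Fin k) B)
    (hM : ∀ a b c d, a < b → d < c → Commute (M a c) (M b d)) (w : Perm (Fin k)) :
    oprod (fun t => M t (w t)) = oprod (fun t => M (w⁻¹ t) t) := by
  have hpair : (List.ofFn w).Pairwise
      fun c d => c ≤ d ∨ Commute (M (w⁻¹ c) c) (M (w⁻¹ d) d) := by
    rw [List.pairwise_ofFn]
    intro a b hab
    refine (le_or_gt (w a) (w b)).imp_right fun hlt => ?_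
    simpa using hM a b _ _ hab hlt
  have hsort := prod_map_insertionSort_of_commute (· ≤ ·) (fun t => M (w⁻¹ t) t) _ hpair
  rw [insertionSort_ofFn_perm, List.map_ofFn, ← List.ofFn_eq_map] at hsort
  simpa [oprod, Function.comp_def] using hsort.symm

/-- The inversion set of a permutation of `Fin k`, whose cardinality is `invCount`. -/
def inversions {k : ℕ} (w : Perm (Fin k)) : Finset (Fin k × Fin k) :=
  {p | p.1 < p.2 ∧ w p.2 < w p.1}

theorem mem_inversions {k : ℕ} {w : Perm (Fin k)} {p : Fin k × Fin k} :
    p ∈ inversions w ↔ p.1 < p.2 ∧ w p.2 < w p.1 := by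
  simp [inversions]

theorem card_inversions {k : ℕ} (w : Perm (Fin k)) : (inversions w).card = invCount w :=
  rfl

theorem invCount_inv {k : ℕ} (w : Perm (Fin k)) : invCount w⁻¹ = invCount w := by
  rw [← card_inversions, ← card_inversions]
  refine Finset.card_bij' (fun p _ => (w⁻¹ p.2, w⁻¹ p.1)) (fun p _ => (w p.2, w p.1)) ?_ ?_ ?_ ?_
    <;> simp +contextual [mem_inversions]

theorem swap_castSucc_succ_lt_swap {m : ℕ} {s : Fin m} {a b : Fin (m + 1)} (hab : a < b)
    (h : ¬(a = s.castSucc ∧ b = s.succ)) :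
    swap s.castSucc s.succ a < swap s.castSucc s.succ b := by
  simp only [swap_apply_def, Fin.lt_def, Fin.ext_iff] at *
  have hcast : (s.castSucc : ℕ) = s := Fin.val_castSucc s
  have hsucc : (s.succ : ℕ) = s + 1 := Fin.val_succ s
  split_ifs <;> omega

theorem inversions_mul_swap_of_lt {m : ℕ} {w : Perm (Fin (m + 1))} {s : Fin m}
    (hw : w s.castSucc < w s.succ) :
    inversions (w * swap s.castSucc s.succ) = insert (s.castSucc, s.succ) ((inversions w).map
      ((swap s.castSucc s.succ).prodCongr (swap s.castSucc s.succ)).toEmbedding) := by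
  ext ⟨a, b⟩
  set σ := swap s.castSucc s.succ with hσ
  have hsymm : σ.symm = σ := symm_swap _ _
  have hσσ (a) : σ (σ a) = a := swap_apply_self _ _ a
  simp only [Finset.mem_insert, Finset.mem_map_equiv, mem_inversions, Prod.mk.injEq,
    Perm.mul_apply, prodCongr_symm, prodCongr_apply, Prod.map_apply, hsymm]
  constructor
  · rintro ⟨hab, hinv⟩
    exact or_iff_not_imp_left.mpr fun h => ⟨swap_castSucc_succ_lt_swap hab h, hinv⟩
  · rintro (⟨rfl, rfl⟩ | ⟨hab, hinv⟩)
    · exact ⟨Fin.castSucc_lt_succ, by simpa only [hσ, swap_apply_left, swap_apply_right] using hw⟩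
    · have hne : ¬(σ a = s.castSucc ∧ σ b = s.succ) := by
        rintro ⟨ha, hb⟩
        rw [ha, hb] at hinv
        exact hinv.not_gt hw
      exact ⟨by simpa only [← hσ, hσσ] using swap_castSucc_succ_lt_swap hab hne, hinv⟩

theorem invCount_mul_swap_of_lt {m : ℕ} {w : Perm (Fin (m + 1))} {s : Fin m}
    (hw : w s.castSucc < w s.succ) :
    invCount (w * swap s.castSucc s.succ) = invCount w + 1 := by
  rw [← card_inversions, ← card_inversions, inversions_mul_swap_of_lt hw,
    Finset.card_insert_of_notMem, Finset.card_map]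
  rw [Finset.mem_map_equiv, mem_inversions]
  simp only [prodCongr_symm, symm_swap, prodCongr_apply, Prod.map_apply, swap_apply_left,
    swap_apply_right]
  exact fun h => h.1.not_gt Fin.castSucc_lt_succ

theorem sum_perm_eq_zero_of_add_mul_swap {A : Type*} [AddCommMonoid A] {k : ℕ}
    {F : Perm (Fin k) → A} {s t : Fin k} (hst : s ≠ t)
    (h : ∀ w : Perm (Fin k), w s < w t → F w + F (w * swap s t) = 0) :
    ∑ w, F w = 0 := by
  refine Finset.sum_involution (fun w _ => w * swap s t) (fun w _ => ?_) (fun w _ _ => ?_)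
    (fun _ _ => Finset.mem_univ _) fun w _ => by simp [mul_assoc]
  · rcases (w.injective.ne hst).lt_or_gt with hlt | hgt
    · exact h w hlt
    · simpa [mul_assoc, add_comm] using h (w * swap s t) (by simpa using hgt)
  · simpa [swap_eq_one_iff] using hst

theorem insertNth_castSucc_eq_insertNth_succ_comp_swap {ι : Type*} {m : ℕ} (p : Fin m) (i : ι)
    (g : Fin m → ι) :
    (p.castSucc.insertNth i g : Fin (m + 1) → ι) =
      (p.succ.insertNth i g : Fin (m + 1) → ι) ∘ swap p.castSucc p.succ := by
  have hswap (v : Fin m) :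
      swap p.castSucc p.succ (p.castSucc.succAbove v) = p.succ.succAbove v := by
    rcases lt_trichotomy v p with hvp | rfl | hpv
    · rw [Fin.succAbove_castSucc_of_lt _ _ hvp, Fin.succAbove_succ_of_le _ _ hvp.le,
        swap_apply_of_ne_of_ne (Fin.castSucc_injective _ |>.ne hvp.ne)
          (Fin.castSucc_lt_succ_iff.mpr hvp.le).ne]
    · rw [Fin.succAbove_castSucc_self, Fin.succAbove_succ_self, swap_apply_right]
    · rw [Fin.succAbove_castSucc_of_le _ _ hpv.le, Fin.succAbove_succ_of_lt _ _ hpv,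
        swap_apply_of_ne_of_ne (Fin.castSucc_lt_succ_iff.mpr hpv.le).ne'
          (Fin.succ_injective _ |>.ne hpv.ne')]
  refine Fin.insertNth_eq_iff.mpr ⟨by simp, funext fun v => ?_⟩
  simp [Fin.removeNth, hswap]

theorem consSeq_omitIdx {m : ℕ} (i j : Fin (m + 1)) :
    consSeq i (omitIdx j) = Fin.cons i j.succAbove := by
  funext t
  refine Fin.cases rfl (fun t => ?_) t
  simp [consSeq, omitIdx, Fin.succAbove, Fin.lt_def, Fin.ext_iff, apply_ite]

end PermutationsAndSequences

section QuantumDeterminant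

open Equiv Matrix

variable {R A : Type*} [CommRing R] [Ring A] [Algebra R A] (q : R)

/-- The summand of the quantum determinant `qDet q M` belonging to the permutation `w`. -/
def qDetTerm {k : ℕ} (M : Matrix (Fin k) (Fin k) A) (w : Perm (Fin k)) : A :=
  (-q) ^ invCount w • oprod fun t => M t (w t)

/-- The quantum determinant of a square matrix over a possibly noncommutative algebra, with the
factors of each term ordered by rows. -/
def qDet {k : ℕ} (M : Matrix (Fin k) (Fin k) A) : A :=
  ∑ w, qDetTerm q M w

/-- The two families of relations on the rows of a matrix that make `qDet q` alternate in adjacent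
rows: entries of one row `q`-commute, and exchanging the rows `a < b` multiplies every quantum
`2 × 2` minor by `-q`. For invertible `q` these are, up to transposition and `q ↔ q⁻¹`, the
`q`-Manin matrices of Chervov, Falqui and Rubtsov. -/
structure IsManin {ι κ : Type*} [LT ι] [LT κ] (M : Matrix ι κ A) : Prop where
  row_mul {a : ι} {c d : κ} (hcd : c < d) : M a c * M a d = q • (M a d * M a c)
  minor_swap {a b : ι} {c d : κ} (hab : a < b) (hcd : c < d) :
    M b c * M a d - q • (M b d * M a c) = -q • (M a c * M b d - q • (M a d * M b c))

variable {q}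

theorem qDet_transpose {k : ℕ} {M : Matrix (Fin k) (Fin k) A}
    (hM : ∀ a b c d, a < b → d < c → Commute (M a c) (M b d)) :
    qDet q Mᵀ = qDet q M := by
  refine Fintype.sum_equiv (Equiv.inv _) _ _ fun w => ?_
  simp only [qDetTerm, Equiv.inv_apply, invCount_inv, oprod_perm_eq_oprod_inv_perm M hM,
    inv_inv, transpose_apply]

section AdjacentRows

variable {m : ℕ} {M : Matrix (Fin (m + 1)) (Fin (m + 1)) A} {s : Fin m}

theorem exists_qDetTerm_add_qDetTerm_mul_swap_eq (M : Matrix (Fin (m + 1)) (Fin (m + 1)) A)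
    {w : Perm (Fin (m + 1))} (hw : w s.castSucc < w s.succ) :
    ∃ P Q : A, ∀ N : Matrix (Fin (m + 1)) (Fin (m + 1)) A,
      (∀ u, u ≠ s.castSucc → u ≠ s.succ → N u = M u) →
      qDetTerm q N w + qDetTerm q N (w * swap s.castSucc s.succ) =
        P * (N s.castSucc (w s.castSucc) * N s.succ (w s.succ) -
          q • (N s.castSucc (w s.succ) * N s.succ (w s.castSucc))) * Q := by
  obtain ⟨P, Q, hPQ⟩ := exists_oprod_eq_mul_mul_mul (fun u => M u (w u)) s
  refine ⟨(-q) ^ invCount w • P, Q, fun N hN => ?_⟩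
  have hw_term := hPQ (fun u => N u (w u)) fun u hs ht => by rw [hN u hs ht]
  have hws_term := hPQ (fun u => N u ((w * swap s.castSucc s.succ) u)) fun u hs ht => by
    rw [hN u hs ht, Perm.mul_apply, swap_apply_of_ne_of_ne hs ht]
  simp only [Perm.mul_apply, swap_apply_left, swap_apply_right] at hws_term
  simp only [qDetTerm, invCount_mul_swap_of_lt hw, Perm.mul_apply, hw_term, hws_term, mul_sub,
    sub_mul, smul_mul_assoc, mul_smul_comm]
  module

theorem qDet_eq_zero_of_adjacent_rows_eq (hrows : M s.castSucc = M s.succ)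
    (hq : ∀ c d, c < d → M s.succ c * M s.succ d = q • (M s.succ d * M s.succ c)) :
    qDet q M = 0 := by
  refine sum_perm_eq_zero_of_add_mul_swap (Fin.castSucc_lt_succ (i := s)).ne fun w hw => ?_
  obtain ⟨P, Q, hPQ⟩ := exists_qDetTerm_add_qDetTerm_mul_swap_eq (q := q) M hw
  rw [hPQ M fun _ _ _ => rfl, hrows, hq _ _ hw, sub_self, mul_zero, zero_mul]

theorem qDet_submatrix_swap_adjacent_rows
    (hM : ∀ c d, c < d → M s.succ c * M s.castSucc d - q • (M s.succ d * M s.castSucc c) =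
      -q • (M s.castSucc c * M s.succ d - q • (M s.castSucc d * M s.succ c))) :
    qDet q (M.submatrix (swap s.castSucc s.succ) id) = -q • qDet q M := by
  rw [← sub_eq_zero, qDet, qDet, Finset.smul_sum, ← Finset.sum_sub_distrib]
  refine sum_perm_eq_zero_of_add_mul_swap (Fin.castSucc_lt_succ (i := s)).ne fun w hw => ?_
  obtain ⟨P, Q, hPQ⟩ := exists_qDetTerm_add_qDetTerm_mul_swap_eq (q := q) M hw
  have hswap := hPQ (M.submatrix (swap s.castSucc s.succ) id) fun u hs ht => by
    ext c
    rw [submatrix_apply, swap_apply_of_ne_of_ne hs ht, id]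
  simp only [submatrix_apply, swap_apply_left, swap_apply_right, id, hM _ _ hw, mul_smul_comm,
    smul_mul_assoc, ← hPQ M fun _ _ _ => rfl] at hswap
  rw [sub_add_sub_comm, hswap, ← smul_add, sub_self]

end AdjacentRows

namespace IsManin

variable {ι : Type*} {m : ℕ}

theorem qDet_insertNth_castSucc [LT ι] {M : Matrix ι (Fin (m + 1)) A} (hM : IsManin q M) {i : ι}
    {g : Fin m → ι} {p : Fin m} (hp : g p < i) :
    qDet q (M.submatrix (p.castSucc.insertNth i g) id) =
      -q • qDet q (M.submatrix (p.succ.insertNth i g) id) := by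
  have hg : (p.succ.insertNth i g : Fin (m + 1) → ι) p.castSucc = g p := by
    rw [← Fin.succAbove_succ_self p, Fin.insertNth_apply_succAbove]
  rw [insertNth_castSucc_eq_insertNth_succ_comp_swap, ← qDet_submatrix_swap_adjacent_rows]
  · rw [submatrix_submatrix, Function.id_comp]
  · intro c d hcd
    simpa only [submatrix_apply, hg, Fin.insertNth_apply_same, id] using hM.minor_swap hp hcd

theorem qDet_cons [LT ι] {M : Matrix ι (Fin (m + 1)) A} (hM : IsManin q M) {i : ι}
    {g : Fin m → ι} (p : Fin (m + 1)) (hp : ∀ r : Fin m, r.castSucc < p → g r < i) :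
    qDet q (M.submatrix (Fin.cons i g) id) =
      (-q) ^ (p : ℕ) • qDet q (M.submatrix (p.insertNth i g) id) := by
  induction p using Fin.induction with
  | zero => simp
  | succ p ih =>
    rw [ih fun r hr => hp r (hr.trans Fin.castSucc_lt_succ),
      hM.qDet_insertNth_castSucc (hp p Fin.castSucc_lt_succ), smul_smul, Fin.val_succ, pow_succ,
      Fin.val_castSucc]

theorem qDet_cons_eq_zero_of_strictMono [Preorder ι] {M : Matrix ι (Fin (m + 1)) A}
    (hM : IsManin q M) {g : Fin m → ι} (hg : StrictMono g) (r : Fin m) :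
    qDet q (M.submatrix (Fin.cons (g r) g) id) = 0 := by
  have hr : (r.castSucc.insertNth (g r) g : Fin (m + 1) → ι) r.succ = g r := by
    rw [← Fin.succAbove_castSucc_self r, Fin.insertNth_apply_succAbove]
  rw [hM.qDet_cons r.castSucc fun t ht => hg (Fin.castSucc_lt_castSucc_iff.mp ht),
    qDet_eq_zero_of_adjacent_rows_eq (s := r), smul_zero]
  · ext c
    simp only [submatrix_apply, hr, Fin.insertNth_apply_same]
  · intro c d hcd
    exact hM.row_mul hcd

theorem qDet_cons_succAbove {M : Matrix (Fin (m + 1)) (Fin (m + 1)) A} (hM : IsManin q M)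
    (i j : Fin (m + 1)) :
    qDet q (M.submatrix (Fin.cons i j.succAbove) id) =
      if i = j then (-q) ^ (j : ℕ) • qDet q M else 0 := by
  split_ifs with hij
  · have hid : (j.insertNth j j.succAbove : Fin (m + 1) → Fin (m + 1)) = id :=
      Fin.insertNth_self_removeNth j id
    rw [hij, hM.qDet_cons j fun r hr => by rwa [Fin.succAbove_of_castSucc_lt j r hr], hid,
      submatrix_id_id]
  · obtain ⟨r, rfl⟩ := Fin.exists_succAbove_eq hij
    exact hM.qDet_cons_eq_zero_of_strictMono (Fin.strictMono_succAbove j) r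

end IsManin

end QuantumDeterminant

section QuantumMatrix

open Matrix

variable {R : Type*} [CommRing R] {q : Rˣ} {n : ℕ} {a b c d : Fin n}

theorem xq_mul_of_col (hab : a < b) :
    xq R q n a c * xq R q n b c = (q : R) • (xq R q n b c * xq R q n a c) := by
  simpa only [xq, map_mul, map_smul] using RingQuot.mkAlgHom_rel R (QMRel.col (q := q) hab)

theorem xq_mul_of_row (hcd : c < d) :
    xq R q n a c * xq R q n a d = (q : R) • (xq R q n a d * xq R q n a c) := by
  simpa only [xq, map_mul, map_smul] using RingQuot.mkAlgHom_rel R (QMRel.row (q := q) hcd)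

theorem commute_xq (hab : a < b) (hdc : d < c) : Commute (xq R q n a c) (xq R q n b d) := by
  simpa only [Commute, SemiconjBy, xq, map_mul] using
    RingQuot.mkAlgHom_rel R (QMRel.comm (q := q) hab hdc)

theorem xq_mul_of_lt_of_lt (hab : a < b) (hcd : c < d) :
    xq R q n a c * xq R q n b d = xq R q n b d * xq R q n a c +
      ((q : R) - ((q⁻¹ : Rˣ) : R)) • (xq R q n a d * xq R q n b c) := by
  simpa only [xq, map_mul, map_add, map_smul] using
    RingQuot.mkAlgHom_rel R (QMRel.qcomm (q := q) hab hcd)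

theorem xq_minor_swap (hab : a < b) (hcd : c < d) :
    xq R q n b c * xq R q n a d - (q : R) • (xq R q n b d * xq R q n a c) =
      -(q : R) • (xq R q n a c * xq R q n b d - (q : R) • (xq R q n a d * xq R q n b c)) := by
  rw [xq_mul_of_lt_of_lt hab hcd, (commute_xq hab hcd).eq]
  match_scalars
  · linear_combination -q.mul_inv
  · ring

theorem isManin_xq : IsManin (q : R) (of (xq R q n)) where
  row_mul := xq_mul_of_row
  minor_swap := xq_minor_swap

theorem isManin_xq_transpose : IsManin (q : R) (of (xq R q n))ᵀ where
  row_mul := xq_mul_of_col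
  minor_swap {a b c d} hab hcd := by
    simpa only [transpose_apply, of_apply, (commute_xq hcd hab).eq] using
      xq_minor_swap (R := R) (q := q) hcd hab

theorem qMinorL_eq_qDet {k : ℕ} (rows cols : Fin k → Fin n) :
    qMinorL R q n rows cols = qDet (q : R) ((of (xq R q n)).submatrix rows cols) := by
  simp [qMinorL, qDet, qDetTerm]

theorem qMinorR_eq_qDet_transpose {k : ℕ} (rows cols : Fin k → Fin n) :
    qMinorR R q n rows cols = qDet (q : R) ((of (xq R q n))ᵀ.submatrix cols rows) := by
  simp [qMinorR, qDet, qDetTerm]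

theorem detq_eq_qDet_transpose : detq R q n = qDet (q : R) (of (xq R q n))ᵀ :=
  qMinorR_eq_qDet_transpose _ _

theorem detq_eq_qDet : detq R q n = qDet (q : R) (of (xq R q n)) :=
  detq_eq_qDet_transpose.trans (qDet_transpose fun _ _ _ _ => commute_xq)

end QuantumMatrix

/-- in `A_q(n,n)`, for all `1 ≤ i,j ≤ n`,
`(i,1,…,ĵ,…,n | 1,…,n)_l = δ_{ij}·(−q)^{j−1}·det_q` and
`(1,…,n | i,1,…,ĵ,…,n)_r = δ_{ij}·(−q)^{2i−j−1}·det_q`. -/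
theorem stmt8 (R : Type*) [CommRing R] (q : Rˣ) (n : ℕ) (hn : 1 ≤ n) (i j : Fin n) :
    qMinorL R q n (consSeq i (omitIdx j)) (fun t => t) =
      (if i = j then (((-q) ^ (j : ℕ) : Rˣ) : R) • detq R q n else 0) ∧
    qMinorR R q n (fun t => t) (consSeq i (omitIdx j)) =
      (if i = j then (((-q) ^ (2 * (i : ℕ) - (j : ℕ) : ℤ) : Rˣ) : R) • detq R q n else 0) := by
  obtain _ | m := n
  · exact i.elim0
  have hL := (isManin_xq (R := R) (q := q)).qDet_cons_succAbove i j
  have hR := (isManin_xq_transpose (R := R) (q := q)).qDet_cons_succAbove i j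
  rw [← qMinorL_eq_qDet, ← detq_eq_qDet] at hL
  rw [← qMinorR_eq_qDet_transpose, ← detq_eq_qDet_transpose] at hR
  rw [consSeq_omitIdx]
  obtain rfl | hij := eq_or_ne i j
  · have hexp : (2 * (i : ℕ) - (i : ℕ) : ℤ) = (i : ℕ) := by ring
    rw [if_pos rfl] at hL hR
    rw [if_pos rfl, if_pos rfl, hexp, zpow_natCast]
    push_cast
    exact ⟨hL, hR⟩
  · rw [if_neg hij] at hL hR
    rw [if_neg hij, if_neg hij]
    exact ⟨hL, hR⟩
end

section
/- (Jacobi's Ratio Theorem, quantum version.) Let 1 ≤ l ≤ n, let i_1<…<i_l and j_1<…<j_l be increasing sequences in {1,…,n}, and let i′_1<…<i′_{n−l} and j′_1<…<j′_{n−l} be the increasing enumerations of their complements in {1,…,n}. Set y_{ab} := (−q)^{b−a}·(1…â…n | 1…b̂…n) ∈ A_q(n,n−1). Then in A_q(n, (n−1)l): Σ_{w∈S_l} (−q^{−1})^{ℓ(w)} · y_{i_{w(1)}j_1} y_{i_{w(2)}j_2} ⋯ y_{i_{w(l)}j_l} = (−q)^{Σ_{t=1}^l (j_t−i_t)} ·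 det_q^{l−1} · (i′_1…i′_{n−l} | j′_1…j′_{n−l}). (Equivalently, ι applied to the starred quantum minor (i_1…i_l|j_1…j_l)* equals (−q)^{Σ(j_t−i_t)} det_q^{l−1} (i′|j′).) -/
open scoped BigOperators

/-- The complementary `(n-1) × (n-1)` quantum minor `(1…î…n | 1…ĵ…n)`. -/
noncomputable def compMinor (R : Type*) [CommRing R] (q : Rˣ) (n : ℕ) (i j : Fin n) :
    AqAlg R q n :=
  qMinorR R q n (omitIdx i) (omitIdx j)

/-- The element `y_{ab} = (−q)^{b−a}·(1…â…n | 1…b̂…n)` of `A_q(n, n−1)`. -/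
noncomputable def yElt (R : Type*) [CommRing R] (q : Rˣ) (n : ℕ) (a b : Fin n) :
    AqAlg R q n :=
  (((-q) ^ ((b : ℤ) - (a : ℤ)) : Rˣ) : R) • compMinor R q n a b

/-!
For increasing rows, a quantum minor with an arbitrary list of columns is antisymmetric up to
powers of `-q` in its columns, by a two-row computation. Transposing a minor does not change its
value, so Laplace expansion is available along any column and any row. Hence the signed
`(n-1) × (n-1)` minors `y` form a left and a right inverse of `x` up to `det_q`, and `det_q` is
central.

Contracting `y` with the row expansions of a minor `(P ∪ {a} | K)` leaves a single term:
`∑ₐ ± y_{at} (P ∪ {a} | K) = ± det_q (P | K ∖ {t})`, up to powers of `-q`. Each step of expanding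
the minor of `y` along its first column therefore releases one factor `det_q` and removes one column
from the complementary minor, and the theorem follows by induction on `l`.
-/

open Finset

section FinsetLemmas

variable {α M : Type*} [LinearOrder α] {S T : Finset α} {a c : α}

theorem card_filter_erase_add_one {p : α → Prop} [DecidablePred p] (ha : a ∈ S) (hp : p a) :
    #{b ∈ S.erase a | p b} + 1 = #{b ∈ S | p b} := by
  rw [filter_erase, card_erase_add_one (mem_filter.mpr ⟨ha, hp⟩)]

theorem filter_erase_of_not {p : α → Prop} [DecidablePred p] (hp : ¬ p a) :
    {b ∈ S.erase a | p b} = {b ∈ S | p b} := by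
  rw [filter_erase, erase_eq_of_notMem fun h => hp (mem_filter.mp h).2]

theorem sum_sum_erase [AddCommMonoid M] (S : Finset α) (F : α → α → M) :
    ∑ a ∈ S, ∑ b ∈ S.erase a, F a b = ∑ a ∈ S, ∑ b ∈ S with a < b, (F a b + F b a) := by
  have split_erase (a : α) :
      ∑ b ∈ S.erase a, F a b = ∑ b ∈ S with a < b, F a b + ∑ b ∈ S with b < a, F a b := by
    rw [← sum_union (disjoint_filter.mpr fun _ _ h => h.not_gt), ← filter_or,
      ← filter_ne']
    simp only [ne_comm, ne_iff_lt_or_gt]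
  have swap : ∑ a ∈ S, ∑ b ∈ S with b < a, F a b = ∑ a ∈ S, ∑ b ∈ S with a < b, F b a := by
    simp only [sum_filter]
    exact sum_comm
  simp only [split_erase, sum_add_distrib, swap]

theorem filter_lt_insert_self (h : ∀ b ∈ S, c < b) : {b ∈ insert c S | b < c} = ∅ := by
  grind

theorem card_filter_lt_insert_of_lt (h : c < a) (hc : c ∉ S) :
    #{b ∈ insert c S | b < a} = #{b ∈ S | b < a} + 1 := by
  rw [filter_insert, if_pos h, card_insert_of_notMem fun hc' => hc (mem_filter.mp hc').1]

theorem card_filter_lt_add_card_filter_lt_compl {n : ℕ} (S : Finset (Fin n)) (a : Fin n) :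
    #{b ∈ S | b < a} + #{b ∈ Sᶜ | b < a} = a := by
  rw [← card_union_of_disjoint (disjoint_filter_filter disjoint_compl_right), ← filter_union,
    union_compl, filter_gt_eq_Iio, Fin.card_Iio]

theorem card_filter_lt_compl_of_forall_lt {n : ℕ} {S : Finset (Fin n)} {a : Fin n}
    (h : ∀ b ∈ S, a < b) : #{b ∈ Sᶜ | b < a} = a := by
  have rank_in_S : #{b ∈ S | b < a} = 0 := by
    simpa [filter_eq_empty_iff] using fun b hb => (h b hb).le
  simpa only [rank_in_S, zero_add] using card_filter_lt_add_card_filter_lt_compl S a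

theorem exists_eq_insert_min (hT : T.Nonempty) : ∃ t U, (∀ b ∈ U, t < b) ∧ T = insert t U :=
  ⟨T.min' hT, T.erase (T.min' hT), fun _ => T.min'_lt_of_mem_erase_min' hT,
    (insert_erase (T.min'_mem hT)).symm⟩

theorem sort_union_of_lt (h : ∀ a ∈ S, ∀ b ∈ T, a < b) : (S ∪ T).sort = S.sort ++ T.sort := by
  have hlt : (S.sort ++ T.sort).Pairwise (· < ·) :=
    List.pairwise_append.mpr ⟨(sortedLT_sort S).pairwise, (sortedLT_sort T).pairwise,
      by simpa using h⟩
  have := (List.toFinset_sort (· ≤ ·) (hlt.imp ne_of_lt)).mpr (hlt.imp le_of_lt)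
  simpa using this

theorem sort_eq_append_of_notMem (hc : c ∉ T) :
    T.sort = ({b ∈ T | b < c} : Finset α).sort ++ ({b ∈ T | c < b} : Finset α).sort := by
  have hT : T = {b ∈ T | b < c} ∪ {b ∈ T | c < b} := by
    rw [← filter_or, filter_true_of_mem]
    exact fun b hb => lt_or_gt_of_ne fun h => hc (h ▸ hb)
  conv_lhs => rw [hT]
  exact sort_union_of_lt fun a ha b hb => (mem_filter.mp ha).2.trans (mem_filter.mp hb).2

theorem sort_eq_append_cons_of_mem (hc : c ∈ T) :
    T.sort = ({b ∈ T | b < c} : Finset α).sort ++ c :: ({b ∈ T | c < b} : Finset α).sort := by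
  have hT : T = {b ∈ T | b < c} ∪ insert c {b ∈ T | c < b} := by grind
  conv_lhs => rw [hT]
  rw [sort_union_of_lt (by grind), sort_insert _ (by grind) (by grind)]

end FinsetLemmas

section Minors

variable {M A α β : Type*} [Monoid M] [Semiring A] [DistribMulAction M A]

/-- The quantum minor `(r₁ … r_k | c₁ … c_k)` of `x` with parameter `u` in place of `-q`, for
sequences `r` of rows and `c` of columns. -/
def seqMinor (u : M) (x : α → β → A) {k : ℕ} (r : Fin k → α) (c : Fin k → β) : A :=
  ∑ w : Equiv.Perm (Fin k), u ^ invCount w • oprod fun t => x (r (w t)) (c t)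

variable [LinearOrder α]

/-- The quantum minor with row set `S` and an arbitrary list of columns, defined by expansion along
the first column; it is `0` if the list and `S` have different lengths. -/
def colMinor (u : M) (x : α → β → A) : List β → Finset α → A
  | [], S => if S = ∅ then 1 else 0
  | c :: L, S => ∑ a ∈ S, u ^ #{b ∈ S | b < a} • (x a c * colMinor u x L (S.erase a))

/-- The quantum minor `(S | T)` with row set `S` and column set `T`, both listed increasingly. -/
def quantumMinor [LinearOrder β] (u : M) (x : α → β → A) (S : Finset α) (T : Finset β) : A :=
  colMinor u x T.sort S

variable {u : M} {x : α → β → A}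

theorem colMinor_append_eq_zero {L : List β} (h : ∀ S, colMinor u x L S = 0) (L₀ : List β)
    (S : Finset α) : colMinor u x (L₀ ++ L) S = 0 := by
  induction L₀ generalizing S with
  | nil => exact h S
  | cons c L₀ ih => simp [colMinor, ih]

theorem commute_colMinor [IsScalarTower M A A] [SMulCommClass M A A] {D : A}
    (h : ∀ a b, Commute D (x a b)) (L : List β) (S : Finset α) :
    Commute D (colMinor u x L S) := by
  induction L generalizing S with
  | nil => rw [colMinor]; split_ifs <;> simp
  | cons c L ih =>
    exact Commute.sum_right _ _ _ fun a _ => ((h a c).mul_right (ih _)).smul_right _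

variable [LinearOrder β]

@[simp]
theorem quantumMinor_empty_right (S : Finset α) :
    quantumMinor u x S ∅ = if S = ∅ then 1 else 0 := by
  rw [quantumMinor, sort_empty, colMinor]

theorem quantumMinor_insert_right {t : β} {T : Finset β} (ht : ∀ b ∈ T, t < b) (S : Finset α) :
    quantumMinor u x S (insert t T) =
      ∑ a ∈ S, u ^ #{b ∈ S | b < a} • (x a t * quantumMinor u x (S.erase a) T) := by
  rw [quantumMinor, sort_insert _ (fun b hb => (ht b hb).le) fun h => lt_irrefl t (ht t h)]
  rfl

@[simp]
theorem quantumMinor_empty_left (T : Finset β) :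
    quantumMinor u x ∅ T = if T = ∅ then 1 else 0 := by
  rcases T.eq_empty_or_nonempty with rfl | hT
  · simp
  · obtain ⟨t, U, ht, rfl⟩ := exists_eq_insert_min hT
    rw [quantumMinor_insert_right ht, sum_empty, if_neg (insert_ne_empty t U)]

end Minors

section Expansion

variable {M A α β : Type*} [CommMonoid M] [Semiring A] [DistribMulAction M A]
  [SMulCommClass M A A] [LinearOrder α] {u : M} {x : α → β → A}

theorem colMinor_cons_congr {v : M} {L L' : List β}
    (h : ∀ S, colMinor u x L S = v • colMinor u x L' S) (c : β) (S : Finset α) :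
    colMinor u x (c :: L) S = v • colMinor u x (c :: L') S := by
  simp only [colMinor, h, smul_sum, mul_smul_comm]
  exact sum_congr rfl fun a _ => smul_comm _ _ _

theorem colMinor_append_congr {v : M} {L L' : List β}
    (h : ∀ S, colMinor u x L S = v • colMinor u x L' S) (L₀ : List β) (S : Finset α) :
    colMinor u x (L₀ ++ L) S = v • colMinor u x (L₀ ++ L') S := by
  induction L₀ generalizing S with
  | nil => exact h S
  | cons c L₀ ih => exact colMinor_cons_congr ih c S

theorem quantumMinor_insert_left [LinearOrder β]
    (hx : ∀ {i k : α} {j l : β}, i < k → l < j → x i j * x k l = x k l * x i j)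
    {s : α} {S : Finset α} (hs : ∀ a ∈ S, s < a) (T : Finset β) :
    quantumMinor u x (insert s S) T =
      ∑ b ∈ T, u ^ #{c ∈ T | c < b} • (x s b * quantumMinor u x S (T.erase b)) := by
  have hsS : s ∉ S := fun h => lt_irrefl s (hs s h)
  induction T using induction_on_min generalizing S with
  | empty => simp
  | insert t T ht ih =>
    have htT : t ∉ T := fun h => lt_irrefl t (ht t h)
    rw [quantumMinor_insert_right ht, sum_insert hsS, sum_insert htT, erase_insert hsS,
      erase_insert htT, filter_lt_insert_self hs, filter_lt_insert_self ht]
    congr 1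
    calc ∑ a ∈ S, u ^ #{b ∈ insert s S | b < a} •
          (x a t * quantumMinor u x ((insert s S).erase a) T)
      _ = ∑ a ∈ S, ∑ b ∈ T, u ^ (#{i ∈ S | i < a} + 1 + #{i ∈ T | i < b}) •
            (x a t * (x s b * quantumMinor u x (S.erase a) (T.erase b))) := by
          refine sum_congr rfl fun a ha => ?_
          rw [card_filter_lt_insert_of_lt (hs a ha) hsS, erase_insert_of_ne (hs a ha).ne,
            ih (fun b hb => hs b (mem_of_mem_erase hb)) fun h => hsS (mem_of_mem_erase h)]
          simp only [mul_sum, smul_sum, mul_smul_comm, smul_smul, pow_add]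
      _ = ∑ b ∈ T, ∑ a ∈ S, u ^ (#{i ∈ T | i < b} + 1 + #{i ∈ S | i < a}) •
            (x s b * (x a t * quantumMinor u x (S.erase a) (T.erase b))) := by
          rw [sum_comm]
          refine sum_congr rfl fun b hb => sum_congr rfl fun a ha => ?_
          rw [← mul_assoc, ← mul_assoc, hx (hs a ha) (ht b hb)]
          congr 2
          ring
      _ = ∑ b ∈ T, u ^ #{c ∈ insert t T | c < b} •
            (x s b * quantumMinor u x S ((insert t T).erase b)) := by
          refine sum_congr rfl fun b hb => ?_
          rw [card_filter_lt_insert_of_lt (ht b hb) htT, erase_insert_of_ne (ht b hb).ne,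
            quantumMinor_insert_right fun c hc => ht c (mem_of_mem_erase hc)]
          simp only [mul_sum, smul_sum, mul_smul_comm, smul_smul, pow_add]

theorem quantumMinor_flip [LinearOrder β]
    (hx : ∀ {i k : α} {j l : β}, i < k → l < j → x i j * x k l = x k l * x i j)
    (S : Finset α) (T : Finset β) : quantumMinor u (flip x) T S = quantumMinor u x S T := by
  induction S using induction_on_min generalizing T with
  | empty => simp
  | insert s S hs ih =>
    simp only [quantumMinor_insert_right hs, quantumMinor_insert_left hx hs, ih, flip]

variable [IsScalarTower M A A]

theorem colMinor_cons_cons (c d : β) (L : List β) (S : Finset α) :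
    colMinor u x (c :: d :: L) S = ∑ a ∈ S, ∑ b ∈ S with a < b,
      u ^ (#{i ∈ S | i < a} + #{i ∈ S.erase a | i < b}) •
        ((x a c * x b d + u • (x b c * x a d)) * colMinor u x L ((S.erase a).erase b)) := by
  simp only [colMinor, mul_sum, smul_sum]
  rw [sum_sum_erase]
  refine sum_congr rfl fun a ha => sum_congr rfl fun b hb => ?_
  have hab : a < b := (mem_filter.mp hb).2
  rw [← card_filter_erase_add_one (p := (· < b)) ha hab,
    filter_erase_of_not (p := (· < a)) hab.not_gt, erase_right_comm (s := S) (a := b) (b := a)]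
  simp only [add_mul, smul_add, smul_mul_assoc, mul_smul_comm, smul_smul, mul_assoc]
  congr 2
  · rw [pow_add]
  · rw [pow_succ, pow_add, mul_right_comm, mul_comm (u ^ _)]

theorem colMinor_append_singleton_eq_sum (c : β) (L : List β) (S : Finset α) :
    colMinor u x (L ++ [c]) S =
      ∑ a ∈ S, u ^ #{b ∈ S | a < b} • (colMinor u x L (S.erase a) * x a c) := by
  induction L generalizing S with
  | nil =>
    refine sum_congr rfl fun a ha => ?_
    simp only [colMinor, mul_ite, mul_one, mul_zero, ite_mul, one_mul, zero_mul]
    split_ifs with h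
    · obtain rfl : S = {a} := by rw [← insert_erase ha, h, insert_empty_eq]
      simp [filter_singleton]
    · simp
  | cons d L ih =>
    simp only [List.cons_append, colMinor, ih, mul_sum, smul_sum, sum_mul]
    rw [sum_comm' (t' := S) (s' := fun b => S.erase b) (by grind)]
    refine sum_congr rfl fun a ha => sum_congr rfl fun b hb => ?_
    obtain ⟨hba, hb⟩ := mem_erase.mp hb
    rw [erase_right_comm (s := S) (a := b) (b := a)]
    simp only [smul_mul_assoc, mul_smul_comm, smul_smul, mul_assoc, ← pow_add]
    congr 2
    rcases lt_or_gt_of_ne hba with h | h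
    · rw [filter_erase_of_not (p := (a < ·)) h.not_gt, filter_erase_of_not (p := (· < b)) h.not_gt,
        add_comm]
    · rw [← card_filter_erase_add_one (p := (a < ·)) hb h,
        ← card_filter_erase_add_one (p := (· < b)) ha h]
      ring

end Expansion

section QuantumMatrix

variable {R A α β : Type*} [CommRing R] [Ring A] [Algebra R A] [LinearOrder α] [LinearOrder β]
  {q : Rˣ} {x : α → β → A}

/-- The array `x` of elements of an `R`-algebra satisfies the defining relations of `A_q(n)`. The
two index sets may be different linear orders, so that transposes and minors can be treated
alike. -/
structure IsQuantumMatrix (q : Rˣ) (x : α → β → A) : Prop where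
  col {i j : α} {k : β} : i < j → x i k * x j k = q • (x j k * x i k)
  row {k : α} {i j : β} : i < j → x k i * x k j = q • (x k j * x k i)
  comm {i k : α} {j l : β} : i < k → l < j → x i j * x k l = x k l * x i j
  qcomm {i k : α} {j l : β} : i < k → j < l → x i j * x k l =
    x k l * x i j + ((q : R) - ((q⁻¹ : Rˣ) : R)) • (x i l * x k j)

namespace IsQuantumMatrix

theorem transpose (hx : IsQuantumMatrix q x) : IsQuantumMatrix q (flip x) where
  col := hx.row
  row := hx.col
  comm h h' := (hx.comm h' h).symm
  qcomm h h' := by simpa only [flip, hx.comm h' h] using hx.qcomm h' h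

theorem two_rows_swap (hx : IsQuantumMatrix q x) {a b : α} {c d : β} (hab : a < b) (hcd : c < d) :
    x a d * x b c + -q • (x b d * x a c) = -q • (x a c * x b d + -q • (x b c * x a d)) := by
  rw [hx.qcomm hab hcd, ← hx.comm hab hcd]
  simp only [Units.smul_def, Units.val_neg]
  linear_combination (norm := module) -q.mul_inv • (x a d * x b c)

theorem colMinor_swap (hx : IsQuantumMatrix q x) {c d : β} (hcd : c < d) (L : List β)
    (S : Finset α) : colMinor (-q) x (d :: c :: L) S = -q • colMinor (-q) x (c :: d :: L) S := by
  simp only [colMinor_cons_cons, smul_sum]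
  refine sum_congr rfl fun a _ => sum_congr rfl fun b hb => ?_
  rw [hx.two_rows_swap (mem_filter.mp hb).2 hcd, smul_comm (-q), smul_mul_assoc]

theorem colMinor_self (hx : IsQuantumMatrix q x) (c : β) (L : List β) (S : Finset α) :
    colMinor (-q) x (c :: c :: L) S = 0 := by
  rw [colMinor_cons_cons]
  refine sum_eq_zero fun a _ => sum_eq_zero fun b hb => ?_
  rw [hx.col (mem_filter.mp hb).2, Units.neg_smul, add_neg_cancel, zero_mul, smul_zero]

theorem colMinor_cons_append (hx : IsQuantumMatrix q x) {c : β} {L₁ : List β}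
    (h : ∀ b ∈ L₁, b < c) (L₂ : List β) (S : Finset α) :
    colMinor (-q) x (c :: (L₁ ++ L₂)) S =
      (-q) ^ L₁.length • colMinor (-q) x (L₁ ++ c :: L₂) S := by
  induction L₁ generalizing S with
  | nil => simp
  | cons d L₁ ih =>
    rw [List.forall_mem_cons] at h
    rw [List.cons_append, hx.colMinor_swap h.1, colMinor_cons_congr (ih h.2),
      List.length_cons, pow_succ', mul_smul, List.cons_append]

theorem colMinor_append_singleton (hx : IsQuantumMatrix q x) {c : β} {L : List β}
    (h : ∀ b ∈ L, c < b) (S : Finset α) :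
    colMinor (-q) x (L ++ [c]) S = (-q) ^ L.length • colMinor (-q) x (c :: L) S := by
  induction L generalizing S with
  | nil => simp
  | cons d L ih =>
    rw [List.forall_mem_cons] at h
    rw [List.cons_append, colMinor_cons_congr (ih h.2), hx.colMinor_swap h.1,
      List.length_cons, pow_succ, mul_smul]

theorem sum_col_mul_quantumMinor (hx : IsQuantumMatrix q x) (S : Finset α) (T : Finset β)
    (c : β) :
    ∑ a ∈ S, (-q) ^ #{b ∈ S | b < a} • (x a c * quantumMinor (-q) x (S.erase a) T) =
      if c ∈ T then 0 else (-q) ^ #{b ∈ T | b < c} • quantumMinor (-q) x S (insert c T) := by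
  change colMinor (-q) x (c :: T.sort) S = _
  split_ifs with hc
  · rw [sort_eq_append_cons_of_mem hc, hx.colMinor_cons_append (by simp),
      colMinor_append_eq_zero (hx.colMinor_self c _), smul_zero]
  · rw [quantumMinor, sort_eq_append_of_notMem hc, hx.colMinor_cons_append (by simp), length_sort,
      sort_eq_append_cons_of_mem (mem_insert_self c T), filter_insert, filter_insert,
      if_neg (lt_irrefl c), if_neg (lt_irrefl c)]

theorem sum_row_mul_quantumMinor (hx : IsQuantumMatrix q x) (S : Finset α) (T : Finset β)
    (a : α) :
    ∑ b ∈ T, (-q) ^ #{c ∈ T | c < b} • (x a b * quantumMinor (-q) x S (T.erase b)) =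
      if a ∈ S then 0 else (-q) ^ #{b ∈ S | b < a} • quantumMinor (-q) x (insert a S) T := by
  have expansion := hx.transpose.sum_col_mul_quantumMinor T S a
  simp only [quantumMinor_flip hx.comm] at expansion
  exact expansion

theorem sum_quantumMinor_mul_col (hx : IsQuantumMatrix q x) (S : Finset α) (T : Finset β)
    (c : β) :
    ∑ a ∈ S, (-q) ^ #{b ∈ S | a < b} • (quantumMinor (-q) x (S.erase a) T * x a c) =
      if c ∈ T then 0 else (-q) ^ #{b ∈ T | c < b} • quantumMinor (-q) x S (insert c T) := by
  simp only [quantumMinor, ← colMinor_append_singleton_eq_sum]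
  split_ifs with hc
  · rw [sort_eq_append_cons_of_mem hc, List.append_assoc]
    refine colMinor_append_eq_zero (fun S => ?_) _ _
    rw [List.cons_append, colMinor_cons_congr (hx.colMinor_append_singleton (by simp)),
      hx.colMinor_self, smul_zero]
  · rw [sort_eq_append_of_notMem hc, List.append_assoc,
      colMinor_append_congr (hx.colMinor_append_singleton (by simp)), length_sort,
      sort_eq_append_cons_of_mem (mem_insert_self c T), filter_insert, filter_insert,
      if_neg (lt_irrefl c), if_neg (lt_irrefl c)]

end IsQuantumMatrix

end QuantumMatrix

section Cofactor

variable {R A : Type*} [CommRing R] [Ring A] [Algebra R A] {n : ℕ} {q : Rˣ} {x : Fin n → Fin n → A}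

/-- The quantum determinant of the square array `x`. -/
def quantumDet (q : Rˣ) (x : Fin n → Fin n → A) : A :=
  quantumMinor (-q) x univ univ

/-- The element `y_{ab} = (-q)^(b-a) (1 … â … n | 1 … b̂ … n)`. The first index is the omitted row,
so it is the transpose of the array `y` that is inverse to `x` up to the quantum determinant. -/
def cofactor (q : Rˣ) (x : Fin n → Fin n → A) (a b : Fin n) : A :=
  (-q) ^ ((b : ℤ) - (a : ℤ)) • quantumMinor (-q) x (univ.erase a) (univ.erase b)

namespace IsQuantumMatrix

theorem sum_cofactor_mul (hx : IsQuantumMatrix q x) (b c : Fin n) :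
    ∑ a, cofactor q x a b * x a c = if b = c then quantumDet q x else 0 := by
  have factor_out (a : Fin n) : cofactor q x a b * x a c = (-q) ^ ((b : ℤ) - (n - 1 : ℤ)) •
      (-q) ^ #{i | a < i} •
        (quantumMinor (-q) x (univ.erase a) (univ.erase b) * x a c) := by
    rw [cofactor, smul_mul_assoc, smul_smul, ← zpow_natCast, ← zpow_add, filter_lt_eq_Ioi,
      Fin.card_Ioi]
    congr 2
    omega
  simp only [factor_out, ← smul_sum, hx.sum_quantumMinor_mul_col]
  by_cases hbc : b = c
  · subst hbc
    rw [if_neg (notMem_erase b univ), if_pos rfl, filter_erase_of_not (p := (b < ·)) (lt_irrefl b),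
      filter_lt_eq_Ioi, Fin.card_Ioi, insert_erase (mem_univ b), smul_smul, ← zpow_natCast,
      ← zpow_add, show (b : ℤ) - (n - 1) + (n - 1 - b : ℕ) = 0 by omega, zpow_zero, one_smul,
      quantumDet]
  · rw [if_pos (mem_erase.mpr ⟨Ne.symm hbc, mem_univ c⟩), if_neg hbc, smul_zero]

theorem sum_mul_cofactor (hx : IsQuantumMatrix q x) (a c : Fin n) :
    ∑ b, x c b * cofactor q x a b = if c = a then quantumDet q x else 0 := by
  have factor_out (b : Fin n) : x c b * cofactor q x a b = (-q) ^ (-(a : ℤ)) •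
      (-q) ^ #{i | i < b} •
        (x c b * quantumMinor (-q) x (univ.erase a) (univ.erase b)) := by
    rw [cofactor, mul_smul_comm, smul_smul, ← zpow_natCast, ← zpow_add, filter_gt_eq_Iio,
      Fin.card_Iio, neg_add_eq_sub]
  simp only [factor_out, ← smul_sum, hx.sum_row_mul_quantumMinor]
  by_cases hca : c = a
  · subst hca
    rw [if_neg (notMem_erase c univ), if_pos rfl, filter_erase_of_not (p := (· < c)) (lt_irrefl c),
      filter_gt_eq_Iio, Fin.card_Iio, insert_erase (mem_univ c), smul_smul, ← zpow_natCast,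
      ← zpow_add, neg_add_cancel, zpow_zero, one_smul, quantumDet]
  · rw [if_pos (mem_erase.mpr ⟨hca, mem_univ c⟩), if_neg hca, smul_zero]

theorem commute_quantumDet (hx : IsQuantumMatrix q x) (c d : Fin n) :
    Commute (quantumDet q x) (x c d) :=
  calc quantumDet q x * x c d
    _ = ∑ a, (∑ b, x c b * cofactor q x a b) * x a d := by simp [hx.sum_mul_cofactor]
    _ = ∑ b, x c b * ∑ a, cofactor q x a b * x a d := by
      simp only [mul_sum, sum_mul, mul_assoc]
      exact sum_comm
    _ = x c d * quantumDet q x := by simp [hx.sum_cofactor_mul]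

theorem commute_quantumDet_cofactor (hx : IsQuantumMatrix q x) (a b : Fin n) :
    Commute (quantumDet q x) (cofactor q x a b) :=
  (commute_colMinor hx.commute_quantumDet _ _).smul_right _

theorem sum_cofactor_mul_quantumMinor (hx : IsQuantumMatrix q x) (P K : Finset (Fin n))
    {t : Fin n} (ht : t ∈ K) :
    ∑ a ∈ Pᶜ, (-q) ^ #{b ∈ P | b < a} •
        (cofactor q x a t * quantumMinor (-q) x (insert a P) K) =
      (-q) ^ #{b ∈ K | b < t} • (quantumDet q x * quantumMinor (-q) x P (K.erase t)) :=
  calc ∑ a ∈ Pᶜ, (-q) ^ #{b ∈ P | b < a} •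
        (cofactor q x a t * quantumMinor (-q) x (insert a P) K)
    _ = ∑ a, cofactor q x a t * ∑ c ∈ K, (-q) ^ #{b ∈ K | b < c} •
          (x a c * quantumMinor (-q) x P (K.erase c)) := by
      simp only [hx.sum_row_mul_quantumMinor, mul_ite, mul_zero, mul_smul_comm]
      rw [sum_ite, sum_const_zero, zero_add]
      congr 1
      ext a
      simp
    _ = ∑ c ∈ K, (-q) ^ #{b ∈ K | b < c} •
          ((∑ a, cofactor q x a t * x a c) * quantumMinor (-q) x P (K.erase c)) := by
      simp only [mul_sum, sum_mul, smul_sum, mul_smul_comm, mul_assoc]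
      exact sum_comm
    _ = (-q) ^ #{b ∈ K | b < t} • (quantumDet q x * quantumMinor (-q) x P (K.erase t)) := by
      simp [hx.sum_cofactor_mul, ht]

theorem quantumMinor_cofactor (hx : IsQuantumMatrix q x) {l : ℕ} {S T : Finset (Fin n)}
    (hS : #S = l + 1) (hT : #T = l + 1) :
    quantumMinor (-q)⁻¹ (cofactor q x) S T =
      (-q) ^ (∑ t ∈ T, (t : ℤ) - ∑ s ∈ S, (s : ℤ)) •
        (quantumDet q x ^ l * quantumMinor (-q) x Sᶜ Tᶜ) := by
  induction l generalizing S T with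
  | zero =>
    obtain ⟨a, rfl⟩ := card_eq_one.mp hS
    obtain ⟨b, rfl⟩ := card_eq_one.mp hT
    simp [quantumMinor, colMinor, cofactor, filter_singleton, compl_singleton]
  | succ l ih =>
    obtain ⟨t, U, ht, rfl⟩ := exists_eq_insert_min (card_pos.mp (by omega : 0 < #T))
    have htU : t ∉ U := fun h => lt_irrefl t (ht t h)
    have hU : #U = l + 1 := by rwa [card_insert_of_notMem htU, add_left_inj] at hT
    have det_pow_comm (a : Fin n) := (hx.commute_quantumDet_cofactor a t).pow_left l
    rw [quantumMinor_insert_right ht]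
    calc ∑ a ∈ S, (-q)⁻¹ ^ #{b ∈ S | b < a} •
          (cofactor q x a t * quantumMinor (-q)⁻¹ (cofactor q x) (S.erase a) U)
      _ = ∑ a ∈ S, (-q) ^ (∑ t ∈ U, (t : ℤ) - ∑ s ∈ S, (s : ℤ)) • (quantumDet q x ^ l *
            ((-q) ^ #{b ∈ Sᶜ | b < a} •
              (cofactor q x a t * quantumMinor (-q) x (insert a Sᶜ) Uᶜ))) := by
        refine sum_congr rfl fun a ha => ?_
        have ha_rank := card_filter_lt_add_card_filter_lt_compl S a
        rw [ih (by rw [card_erase_of_mem ha, hS, Nat.add_sub_cancel]) hU, compl_erase,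
          mul_smul_comm, mul_smul_comm, ← mul_assoc, ← mul_assoc, (det_pow_comm a).eq,
          smul_smul, smul_smul, inv_pow, ← zpow_natCast, ← zpow_natCast, ← zpow_neg, ← zpow_add,
          ← zpow_add, sum_erase_eq_sub ha]
        congr 2
        omega
      _ = (-q) ^ (∑ t ∈ U, (t : ℤ) - ∑ s ∈ S, (s : ℤ)) • (quantumDet q x ^ l *
            ((-q) ^ (t : ℕ) • (quantumDet q x * quantumMinor (-q) x Sᶜ (insert t U)ᶜ))) := by
        have step := hx.sum_cofactor_mul_quantumMinor Sᶜ Uᶜ (mem_compl.mpr htU)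
        rw [compl_compl, card_filter_lt_compl_of_forall_lt ht] at step
        rw [← smul_sum, ← mul_sum, step, compl_insert]
      _ = (-q) ^ (∑ t ∈ insert t U, (t : ℤ) - ∑ s ∈ S, (s : ℤ)) •
            (quantumDet q x ^ (l + 1) * quantumMinor (-q) x Sᶜ (insert t U)ᶜ) := by
        rw [mul_smul_comm, smul_smul, ← zpow_natCast, ← zpow_add, sum_insert htU, pow_succ,
          mul_assoc]
        congr 2
        ring

end IsQuantumMatrix

end Cofactor

section Sequences

/-- The permutation `0 ↦ a`, `t + 1 ↦ a.succAbove (σ t)`, whose one-line notation is obtained from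
that of `σ` by putting `a` in front; used to expand a minor along its first column. -/
def consPerm {k : ℕ} (a : Fin (k + 1)) (σ : Equiv.Perm (Fin k)) : Equiv.Perm (Fin (k + 1)) :=
  (Equiv.Perm.decomposeFin.symm (0, σ)).trans a.cycleRange.symm

@[simp]
theorem consPerm_zero {k : ℕ} (a : Fin (k + 1)) (σ : Equiv.Perm (Fin k)) : consPerm a σ 0 = a := by
  simp [consPerm]

@[simp]
theorem consPerm_succ {k : ℕ} (a : Fin (k + 1)) (σ : Equiv.Perm (Fin k)) (t : Fin k) :
    consPerm a σ t.succ = a.succAbove (σ t) := by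
  simp [consPerm]

theorem consPerm_bijective (k : ℕ) :
    Function.Bijective fun p : Fin (k + 1) × Equiv.Perm (Fin k) => consPerm p.1 p.2 := by
  refine (Fintype.bijective_iff_injective_and_card _).mpr ⟨?_, ?_⟩
  · rintro ⟨a, σ⟩ ⟨b, τ⟩ (h : consPerm a σ = consPerm b τ)
    obtain rfl : a = b := by simpa using Equiv.congr_fun h 0
    have hστ : σ = τ := Equiv.ext fun t => by simpa using Equiv.congr_fun h t.succ
    rw [hστ]
  · simp [Fintype.card_perm, Nat.factorial_succ]

theorem invCount_consPerm {k : ℕ} (a : Fin (k + 1)) (σ : Equiv.Perm (Fin k)) :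
    invCount (consPerm a σ) = a + invCount σ := by
  have inversions_with_zero : ∑ t, (if a.succAbove (σ t) < a then 1 else 0) = (a : ℕ) := by
    rw [Equiv.sum_comp σ fun t => if a.succAbove t < a then 1 else 0]
    have := Fin.sum_univ_succAbove (fun b => if b < a then 1 else 0) a
    rw [← card_filter, filter_gt_eq_Iio, Fin.card_Iio, if_neg (lt_irrefl a), zero_add] at this
    exact this.symm
  simp only [invCount, card_filter, Fintype.sum_prod_type]
  rw [Fin.sum_univ_succ, Fin.sum_univ_succ]
  simp [Fin.sum_univ_succ (n := k), Fin.succAbove_lt_succAbove_iff, inversions_with_zero,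
    Fin.succ_lt_succ_iff]

variable {M A α β : Type*} [CommMonoid M] [Semiring A] [DistribMulAction M A]
  [SMulCommClass M A A] [LinearOrder α]

theorem seqMinor_eq_colMinor (u : M) (x : α → β → A) {k : ℕ} {r : Fin k → α} (hr : StrictMono r)
    (c : Fin k → β) : seqMinor u x r c = colMinor u x (List.ofFn c) (univ.image r) := by
  induction k with
  | zero => simp [seqMinor, colMinor, oprod, invCount]
  | succ k ih =>
    rw [seqMinor, ← (consPerm_bijective k).sum_comp, Fintype.sum_prod_type, List.ofFn_succ,
      colMinor, sum_image hr.injective.injOn]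
    refine sum_congr rfl fun a _ => ?_
    have row_rank : #{b ∈ univ.image r | b < r a} = a := by
      simp only [filter_image, hr.lt_iff_lt, filter_gt_eq_Iio]
      rw [card_image_of_injective _ hr.injective, Fin.card_Iio]
    have rows_erase : (univ.image r).erase (r a) = univ.image (r ∘ a.succAbove) := by
      rw [← image_erase hr.injective, ← image_image, Fin.image_succAbove_univ, compl_singleton]
    rw [row_rank, rows_erase, ← ih (hr.comp (Fin.strictMono_succAbove a)), seqMinor, mul_sum,
      smul_sum]
    refine sum_congr rfl fun σ _ => ?_
    simp [oprod, invCount_consPerm, List.ofFn_succ, mul_smul_comm, smul_smul, pow_add]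

theorem seqMinor_eq_quantumMinor [LinearOrder β] (u : M) (x : α → β → A) {k : ℕ} {r : Fin k → α}
    (hr : StrictMono r) {c : Fin k → β} (hc : StrictMono c) :
    seqMinor u x r c = quantumMinor u x (univ.image r) (univ.image c) := by
  have hsorted := hc.sortedLT_ofFn.pairwise
  have hsort := (List.toFinset_sort (· ≤ ·) (hsorted.imp ne_of_lt)).mpr (hsorted.imp le_of_lt)
  rw [seqMinor_eq_colMinor u x hr, quantumMinor, ← hsort]
  congr 2
  ext b
  simp [List.mem_ofFn]

theorem omitIdx_eq_succAbove {m : ℕ} (a : Fin (m + 1)) : omitIdx a = a.succAbove := by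
  ext t
  simp only [omitIdx, Fin.succAbove, Fin.lt_def, Fin.val_castSucc]
  split_ifs <;> rfl

theorem omitIdx_strictMono {n : ℕ} (a : Fin n) : StrictMono (omitIdx a) := by
  obtain _ | m := n
  · exact a.elim0
  · exact omitIdx_eq_succAbove a ▸ Fin.strictMono_succAbove a

theorem image_omitIdx {n : ℕ} (a : Fin n) : univ.image (omitIdx a) = univ.erase a := by
  obtain _ | m := n
  · exact a.elim0
  · rw [omitIdx_eq_succAbove, ← compl_singleton]
    exact Fin.image_succAbove_univ a

end Sequences

theorem isQuantumMatrix_xq (R : Type*) [CommRing R] (q : Rˣ) (n : ℕ) :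
    IsQuantumMatrix q (xq R q n) where
  col {i j k} h := by
    have relation := RingQuot.mkAlgHom_rel R (QMRel.col (R := R) (q := q) (k := k) h)
    simp only [map_mul, map_smul] at relation
    exact relation
  row {k i j} h := by
    have relation := RingQuot.mkAlgHom_rel R (QMRel.row (R := R) (q := q) (k := k) h)
    simp only [map_mul, map_smul] at relation
    exact relation
  comm h h' := by
    have relation := RingQuot.mkAlgHom_rel R (QMRel.comm (R := R) (q := q) h h')
    simp only [map_mul] at relation
    exact relation
  qcomm h h' := by
    have relation := RingQuot.mkAlgHom_rel R (QMRel.qcomm (R := R) (q := q) h h')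
    simp only [map_mul, map_add, map_smul] at relation
    exact relation

theorem stmt10_general {R A : Type*} [CommRing R] [Ring A] [Algebra R A] {q : Rˣ} {n l m : ℕ}
    {x : Fin n → Fin n → A} (hx : IsQuantumMatrix q x) (hl : 1 ≤ l)
    {i j : Fin l → Fin n} (hi : StrictMono i) (hj : StrictMono j)
    {i' j' : Fin m → Fin n} (hi' : StrictMono i') (hj' : StrictMono j')
    (hicompl : ∀ a, (∃ t, i' t = a) ↔ ¬ ∃ t, i t = a)
    (hjcompl : ∀ b, (∃ t, j' t = b) ↔ ¬ ∃ t, j t = b) :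
    seqMinor (-q⁻¹) (fun a b : Fin n => (-q) ^ ((b : ℤ) - (a : ℤ)) •
        seqMinor (-q) x (omitIdx a) (omitIdx b)) i j =
      (-q) ^ (∑ t, ((j t : ℤ) - (i t : ℤ))) •
        (seqMinor (-q) x (fun t => t) (fun t => t) ^ (l - 1) * seqMinor (-q) x i' j') := by
  obtain ⟨l, rfl⟩ := Nat.exists_eq_add_of_le' hl
  have cofactor_eq : (fun a b : Fin n => (-q) ^ ((b : ℤ) - (a : ℤ)) •
      seqMinor (-q) x (omitIdx a) (omitIdx b)) = cofactor q x := by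
    ext a b
    rw [seqMinor_eq_quantumMinor _ _ (omitIdx_strictMono a) (omitIdx_strictMono b),
      image_omitIdx, image_omitIdx, cofactor]
  have det_eq : seqMinor (-q) x (fun t => t) (fun t => t) = quantumDet q x :=
    (seqMinor_eq_quantumMinor _ _ strictMono_id strictMono_id).trans (by rw [image_id, quantumDet])
  have rows_compl : univ.image i' = (univ.image i)ᶜ := by ext a; simpa using hicompl a
  have cols_compl : univ.image j' = (univ.image j)ᶜ := by ext b; simpa using hjcompl b
  rw [cofactor_eq, det_eq, seqMinor_eq_quantumMinor _ _ hi hj, seqMinor_eq_quantumMinor _ _ hi' hj',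
    rows_compl, cols_compl, ← inv_neg, hx.quantumMinor_cofactor (l := l)
      (by simp [card_image_of_injective _ hi.injective])
      (by simp [card_image_of_injective _ hj.injective]),
    sum_image hi.injective.injOn, sum_image hj.injective.injOn, sum_sub_distrib,
    Nat.add_sub_cancel]

/-- Jacobi's Ratio Theorem, quantum version. -/
theorem stmt10 (R : Type*) [CommRing R] (q : Rˣ) (n l : ℕ) (hl1 : 1 ≤ l) (hln : l ≤ n)
    (i j : Fin l → Fin n) (hi : StrictMono i) (hj : StrictMono j)
    (i' j' : Fin (n - l) → Fin n) (hi' : StrictMono i') (hj' : StrictMono j')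
    (hicompl : ∀ x : Fin n, (∃ t, i' t = x) ↔ ¬ ∃ t, i t = x)
    (hjcompl : ∀ x : Fin n, (∃ t, j' t = x) ↔ ¬ ∃ t, j t = x) :
    ∑ w : Equiv.Perm (Fin l),
        (((-(q⁻¹)) ^ invCount w : Rˣ) : R) •
          oprod (fun t => yElt R q n (i (w t)) (j t)) =
      (((-q) ^ (∑ t, ((j t : ℤ) - (i t : ℤ))) : Rˣ) : R) •
        (detq R q n ^ (l - 1) * qMinorR R q n i' j') :=
  stmt10_general (isQuantumMatrix_xq R q n) hl1 hi hj hi' hj' hicompl hjcompl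
end
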